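/- Let f ∈ ℝ[x,y,z] be a polynomial of degree d. Then either there exists a constant c > 0, depending only on d, such that for all finite sets A, B, C ⊂ ℝ with |A| = |B| = |C| = n one has |f(A×B×C)| ≥ c·n^{3/2}, or f has one of the forms f = g(h(x)+k(y)+l(z)) or f = g(h(x)·k(y)·l(z)) for some univariate polynomials g, h, k, l ∈ ℝ[t]. -/

import Mathlib

open MvPolynomial

noncomputable section

attribute [local instance] Classical.propDecidable

/-!
If some partial derivative of `f` vanishes, one variable can be dropped, so consider first an `f`
all of whose partial derivatives are nonzero. When every quotient `∂ᵢf / ∂ⱼf` depends only on the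
variables `i` and `j`, it has the form `(cᵢ / aᵢ) / (cⱼ / aⱼ)` with univariate `aᵢ`, `cᵢ`. The
polynomials with the same quotients form a space on which the derivation `D = (aᵢ / cᵢ) ∂ᵢ` (the
same for every `i`) acts without raising degrees, with eigenvalues `0, μ, 2μ, …` for some `μ`. If
`μ = 0`, then `D` is locally nilpotent, some `p` has `Dp = 1`, and every element of the space is a
polynomial in `p`, which is a sum of univariate polynomials. If `μ ≠ 0`, the eigenvectors are powers
of one eigenvector `w`, which is a product of univariate polynomials. For two variables the
condition on the quotient is a cross-ratio identity at the corners of axis-parallel rectangles.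

When the condition fails, the Jacobian criterion makes four polynomials algebraically independent:
`x`, `u`, `f(x, y, z)`, `f(u, y, z)` in three variables, the values of `f` at the corners of a
rectangle in two. Eliminating then bounds how often a value pair `(f(a, b), f(a', b))` can recur
(in two variables, on average). Match almost every `a ∈ A` with a nearby `π(a) ∈ A`. Since a
univariate polynomial of bounded degree is piecewise monotone, the values `f(a, b)` and `f(π(a), b)`
are mostly close among all `m` values of `f`: they lie in a set `Q` of `O(m (m + n) / n)` pairs.
Comparing this with the bounded multiplicity gives `n² ≪ |Q|`, hence `n³ ≪ m (m + n)`.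
-/

open scoped Polynomial

namespace ExpandingPolynomial

/-! ### Partial derivatives -/

section PDeriv

variable {R σ τ : Type*} [CommRing R]

theorem pderiv_comm (i j : σ) (f : MvPolynomial σ R) :
    pderiv i (pderiv j f) = pderiv j (pderiv i f) := by
  have h : ⁅pderiv i, pderiv j⁆ = (0 : Derivation R (MvPolynomial σ R) (MvPolynomial σ R)) :=
    derivation_ext fun k => by
      rw [Derivation.commutator_apply, pderiv_X, pderiv_X, Derivation.zero_apply]
      simp only [Pi.single_apply]
      split_ifs <;> simp
  exact sub_eq_zero.1 (by rw [← Derivation.commutator_apply, h, Derivation.zero_apply])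

theorem derivation_aeval [Fintype σ] {A : Type*} [CommRing A] [Algebra R A]
    (δ : Derivation R A A) (F : σ → A) (Q : MvPolynomial σ R) :
    δ (aeval F Q) = ∑ i, aeval F (pderiv i Q) * δ (F i) := by
  induction Q using MvPolynomial.induction_on with
  | C a => simp
  | add p q hp hq => simp [hp, hq, add_mul, Finset.sum_add_distrib]
  | mul_X p j hp =>
    simp [hp, pderiv_X, Pi.single_apply, add_mul, Finset.sum_add_distrib, Finset.mul_sum,
      apply_ite (aeval F), mul_assoc]

theorem eval_pderiv_rename [Fintype τ] (e : τ → σ) (g : MvPolynomial τ R) (v : σ → R) (j : σ) :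
    eval v (pderiv j (rename e g)) = ∑ i, if e i = j then eval (v ∘ e) (pderiv i g) else 0 := by
  rw [rename_eq_aeval, derivation_aeval, ← rename_eq_aeval, map_sum]
  refine Finset.sum_congr rfl fun i _ => ?_
  split_ifs with h <;> simp [eval_rename, pderiv_X, h]

theorem pderiv_toMvPolynomial (i : σ) (p : R[X]) :
    pderiv i (p.toMvPolynomial i) = (Polynomial.derivative p).toMvPolynomial i := by
  simp [Polynomial.toMvPolynomial]

theorem pderiv_toMvPolynomial_of_ne {i j : σ} (h : j ≠ i) (p : R[X]) :
    pderiv i (p.toMvPolynomial j) = 0 := by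
  simp [Polynomial.toMvPolynomial, pderiv_X_of_ne h]

theorem add_single_mem_support_of_mem_support_pderiv {i : σ} {f : MvPolynomial σ R} {m : σ →₀ ℕ}
    (hm : m ∈ (pderiv i f).support) : m + Finsupp.single i 1 ∈ f.support :=
  mem_support_iff.2 fun h => mem_support_iff.1 hm (by rw [coeff_pderiv, h, zero_mul])

theorem degreeOf_pderiv_le (i j : σ) (f : MvPolynomial σ R) :
    degreeOf i (pderiv j f) ≤ degreeOf i f := by
  refine degreeOf_le_iff.2 fun m hm => ?_
  have := monomial_le_degreeOf i (add_single_mem_support_of_mem_support_pderiv hm)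
  exact le_trans (by simp) this

theorem degreeOf_pderiv_self_le (i : σ) (f : MvPolynomial σ R) :
    degreeOf i (pderiv i f) ≤ degreeOf i f - 1 := by
  refine degreeOf_le_iff.2 fun m hm => ?_
  have := monomial_le_degreeOf i (add_single_mem_support_of_mem_support_pderiv hm)
  simp only [Finsupp.add_apply, Finsupp.single_eq_same] at this
  lia

theorem pderiv_eq_zero_of_degreeOf_eq_zero {i : σ} {f : MvPolynomial σ R}
    (h : degreeOf i f = 0) : pderiv i f = 0 :=
  pderiv_eq_zero_of_notMem_vars (mt mem_vars_iff_degreeOf_ne_zero.1 (not_not.2 h))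

theorem totalDegree_pderiv_lt {i : σ} {f : MvPolynomial σ R} (h : pderiv i f ≠ 0) :
    (pderiv i f).totalDegree < f.totalDegree := by
  obtain ⟨m, hm, hdeg⟩ := Finset.exists_mem_eq_sup _ (support_nonempty.2 h)
    fun s : σ →₀ ℕ => s.sum fun _ e => e
  have hle := le_totalDegree (add_single_mem_support_of_mem_support_pderiv hm)
  rw [Finsupp.sum_add_index' (fun _ => rfl) (fun _ _ _ => rfl), Finsupp.sum_single_index rfl] at hle
  rw [totalDegree, hdeg]
  lia

theorem totalDegree_rename_of_injective {e : σ → τ} (he : Function.Injective e)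
    (f : MvPolynomial σ R) : (rename e f).totalDegree = f.totalDegree := by
  simp [totalDegree, support_rename_of_injective he, Finset.sup_image, Function.comp_def,
    Finsupp.sum_mapDomain_index]

variable [IsDomain R] [CharZero R]

theorem sub_single_mem_support_pderiv {i : σ} {f : MvPolynomial σ R} {m : σ →₀ ℕ}
    (hm : m ∈ f.support) (hi : m i ≠ 0) : m - Finsupp.single i 1 ∈ (pderiv i f).support := by
  rw [mem_support_iff, coeff_pderiv, tsub_add_cancel_of_le
    (Finsupp.single_le_iff.2 (Nat.one_le_iff_ne_zero.2 hi))]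
  exact mul_ne_zero (mem_support_iff.1 hm) (Nat.cast_add_one_ne_zero _)

theorem degreeOf_le_degreeOf_pderiv_add_one (i : σ) (f : MvPolynomial σ R) :
    degreeOf i f ≤ degreeOf i (pderiv i f) + 1 := by
  refine degreeOf_le_iff.2 fun m hm => ?_
  by_cases hi : m i = 0
  · lia
  have := monomial_le_degreeOf i (sub_single_mem_support_pderiv hm hi)
  simp only [Finsupp.tsub_apply, Finsupp.single_eq_same] at this
  lia

theorem degreeOf_eq_zero_of_pderiv_eq_zero {i : σ} {f : MvPolynomial σ R} (h : pderiv i f = 0) :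
    degreeOf i f = 0 := by
  refine Nat.le_zero.1 (degreeOf_le_iff.2 fun m hm => ?_)
  by_contra! hi
  simpa [h] using sub_single_mem_support_pderiv hm hi.ne'

theorem exists_rename_eq_of_pderiv_eq_zero {e : τ → σ} (he : Function.Injective e)
    {f : MvPolynomial σ R} (h : ∀ i ∉ Set.range e, pderiv i f = 0) :
    ∃ g : MvPolynomial τ R, rename e g = f ∧ g.totalDegree ≤ f.totalDegree := by
  obtain ⟨g, hg⟩ := exists_rename_eq_of_vars_subset_range f e he fun i hi => by
    by_contra hr
    exact mem_vars_iff_degreeOf_ne_zero.1 hi (degreeOf_eq_zero_of_pderiv_eq_zero (h i hr))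
  exact ⟨g, hg, by rw [← hg, totalDegree_rename_of_injective he]⟩

end PDeriv

theorem eq_C_of_degreeOf_eq_zero {R σ : Type*} [CommRing R] {f : MvPolynomial σ R}
    (h : ∀ i, degreeOf i f = 0) : f = C (coeff 0 f) :=
  vars_eq_empty_iff_eq_C.1 <| Finset.eq_empty_of_forall_notMem fun i hi =>
    mem_vars_iff_degreeOf_ne_zero.1 hi (h i)

theorem eq_C_of_pderiv_eq_zero {R σ : Type*} [CommRing R] [IsDomain R] [CharZero R]
    {f : MvPolynomial σ R} (h : ∀ i, pderiv i f = 0) : f = C (coeff 0 f) :=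
  eq_C_of_degreeOf_eq_zero fun i => degreeOf_eq_zero_of_pderiv_eq_zero (h i)

/-! ### Univariate polynomials in one of several variables -/

section ToMvPolynomial

variable {K σ : Type*} [Field K] {i j : σ} {p q : K[X]}

theorem toMvPolynomial_ne_zero (hp : p ≠ 0) : p.toMvPolynomial i ≠ 0 :=
  (map_ne_zero_iff _ (Polynomial.toMvPolynomial_injective i)).2 hp

theorem toMvPolynomial_eq_sum_monomial (i : σ) (p : K[X]) :
    p.toMvPolynomial i =
      ∑ n ∈ Finset.range (p.natDegree + 1), monomial (Finsupp.single i n) (p.coeff n) := by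
  simp_rw [Polynomial.toMvPolynomial, Polynomial.aeval_eq_sum_range, smul_eq_C_mul,
    C_mul_X_pow_eq_monomial]

theorem coeff_toMvPolynomial (i : σ) (p : K[X]) (n : ℕ) :
    coeff (Finsupp.single i n) (p.toMvPolynomial i) = p.coeff n := by
  simp only [toMvPolynomial_eq_sum_monomial, coeff_sum, coeff_monomial,
    (Finsupp.single_injective i).eq_iff]
  simp +contextual [Polynomial.coeff_eq_zero_of_natDegree_lt]

theorem degreeOf_toMvPolynomial (i : σ) (p : K[X]) :
    degreeOf i (p.toMvPolynomial i) = p.natDegree := by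
  refine le_antisymm ?_ ?_
  · rw [toMvPolynomial_eq_sum_monomial]
    refine (degreeOf_sum_le _ _ _).trans (Finset.sup_le fun n hn => ?_)
    refine degreeOf_le_iff.2 fun m hm => ?_
    rw [Finset.mem_singleton.1 (support_monomial_subset hm), Finsupp.single_eq_same]
    exact Finset.mem_range_succ_iff.1 hn
  · rcases eq_or_ne p 0 with rfl | hp
    · simp
    have hmem : Finsupp.single i p.natDegree ∈ (p.toMvPolynomial i).support := by
      rw [mem_support_iff, coeff_toMvPolynomial]
      exact Polynomial.leadingCoeff_ne_zero.2 hp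
    simpa using monomial_le_degreeOf i hmem

theorem degreeOf_toMvPolynomial_of_ne (h : j ≠ i) (p : K[X]) :
    degreeOf j (p.toMvPolynomial i) = 0 := by
  rw [toMvPolynomial_eq_sum_monomial]
  refine Nat.le_zero.1 ((degreeOf_sum_le _ _ _).trans (Finset.sup_le fun n _ => ?_))
  refine degreeOf_le_iff.2 fun m hm => ?_
  simp [Finset.mem_singleton.1 (support_monomial_subset hm), Finsupp.single_eq_of_ne h]

theorem coeff_toMvPolynomial_mul {k : ℕ} {G : MvPolynomial σ K} {m : σ →₀ ℕ}
    (hp : p.natDegree ≤ k) (hG : degreeOf i G ≤ m i) :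
    coeff (m + Finsupp.single i k) (p.toMvPolynomial i * G) = p.coeff k * coeff m G := by
  have hterm : ∀ n ≤ k, n ≠ k →
      coeff (m + Finsupp.single i k) (monomial (Finsupp.single i n) (p.coeff n) * G) = 0 := by
    intro n hnk hne
    have hsplit : m + Finsupp.single i k = Finsupp.single i n + (m + Finsupp.single i (k - n)) := by
      rw [add_left_comm, ← Finsupp.single_add, Nat.add_sub_cancel' hnk]
    rw [hsplit, coeff_monomial_mul, notMem_support_iff.1 fun hmem => ?_, mul_zero]
    have := (monomial_le_degreeOf i hmem).trans hG
    simp only [Finsupp.add_apply, Finsupp.single_eq_same] at this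
    lia
  rw [toMvPolynomial_eq_sum_monomial, Finset.sum_mul, coeff_sum]
  rcases hp.eq_or_lt with rfl | hlt
  · rw [Finset.sum_eq_single_of_mem _ (Finset.self_mem_range_succ _)
      fun n hn hne => hterm n (Finset.mem_range_succ_iff.1 hn) hne, add_comm, coeff_monomial_mul]
  · rw [Polynomial.coeff_eq_zero_of_natDegree_lt hlt, zero_mul]
    exact Finset.sum_eq_zero fun n hn => hterm n (by grind) (by grind)

theorem isRelPrime_toMvPolynomial (hij : i ≠ j) (hp : p ≠ 0) (hq : q ≠ 0) :
    IsRelPrime (p.toMvPolynomial i) (q.toMvPolynomial j) := by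
  rintro d ⟨r, hr⟩ ⟨s, hs⟩
  have hp' := toMvPolynomial_ne_zero (i := i) hp
  have hq' := toMvPolynomial_ne_zero (i := j) hq
  have hd : d = C (coeff 0 d) := eq_C_of_degreeOf_eq_zero fun k => by
    rcases eq_or_ne k i with rfl | hk
    · have h := degreeOf_toMvPolynomial_of_ne hij q
      rw [hs] at h hq'
      rw [degreeOf_mul_eq (left_ne_zero_of_mul hq') (right_ne_zero_of_mul hq')] at h
      lia
    · have h := degreeOf_toMvPolynomial_of_ne hk p
      rw [hr] at h hp'
      rw [degreeOf_mul_eq (left_ne_zero_of_mul hp') (right_ne_zero_of_mul hp')] at h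
      lia
  have hd0 : d ≠ 0 := fun h => hp' (by rw [hr, h, zero_mul])
  refine isUnit_iff_eq_C_of_isReduced.2 ⟨_, IsUnit.mk0 _ fun h => hd0 ?_, hd⟩
  rw [hd, h, C_0]

end ToMvPolynomial

/-! ### Restriction to coordinate lines -/

section Slice

variable {K σ : Type*} [Field K]

/-- The restriction of a polynomial to the line through `O` in the direction of the `i`-th
coordinate axis. -/
def slice (O : σ → K) (i : σ) : MvPolynomial σ K →ₐ[K] K[X] :=
  aeval (Function.update (fun j => Polynomial.C (O j)) i Polynomial.X)

theorem slice_toMvPolynomial (O : σ → K) (i : σ) (q : K[X]) :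
    slice O i (q.toMvPolynomial i) = q := by
  simp [slice]

theorem eval_slice (O : σ → K) (i : σ) (f : MvPolynomial σ K) (t : K) :
    (slice O i f).eval t = eval (Function.update O i t) f := by
  have h : (Polynomial.aeval t).comp (slice O i) = aeval (Function.update O i t) :=
    algHom_ext fun j => by
      rcases eq_or_ne j i with rfl | hj <;> simp [slice, *]
  simpa [aeval_eq_eval] using DFunLike.congr_fun h f

theorem eval_slice_self (O : σ → K) (i : σ) (f : MvPolynomial σ K) :
    (slice O i f).eval (O i) = eval O f := by
  rw [eval_slice, Function.update_eq_self]

theorem derivative_slice [Finite σ] (O : σ → K) (i : σ) (f : MvPolynomial σ K) :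
    Polynomial.derivative (slice O i f) = slice O i (pderiv i f) := by
  have := Fintype.ofFinite σ
  have h := derivation_aeval Polynomial.derivative'
    (Function.update (fun j => Polynomial.C (O j)) i Polynomial.X) f
  rw [Finset.sum_eq_single i (fun j _ hj => by simp [hj]) (by simp)] at h
  simpa [slice] using h

theorem natDegree_slice_le (O : σ → K) (i : σ) (f : MvPolynomial σ K) :
    (slice O i f).natDegree ≤ f.totalDegree := by
  have h := aeval_natDegree_le f le_rfl
    (Function.update (fun j => Polynomial.C (O j)) i Polynomial.X) (n := 1) fun j => by
      rcases eq_or_ne j i with rfl | hj <;> simp [*]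
  simpa [slice] using h

end Slice

/-! ### Polynomials with proportional partial derivatives -/

section Wronskian

variable {K σ : Type*} [Field K] [CharZero K]

theorem eq_C_mul_of_forall_pderiv_mul_eq {E G : MvPolynomial σ K} (hG : G ≠ 0)
    (h : ∀ i, pderiv i E * G = E * pderiv i G) : ∃ r : K, E = C r * G := by
  obtain ⟨g, e, c, hrel, rfl, rfl⟩ := UniqueFactorizationMonoid.exists_reduced_factors G hG E
  have hc : c ≠ 0 := left_ne_zero_of_mul hG
  have hg : g ≠ 0 := right_ne_zero_of_mul hG
  have hcancel : ∀ i, pderiv i e * g = e * pderiv i g := fun i =>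
    mul_left_cancel₀ (mul_ne_zero hc hc) (by
      have hi := h i
      simp only [pderiv_mul] at hi
      linear_combination hi)
  have hg' : ∀ i, pderiv i g = 0 := fun i => by
    by_contra hne
    have hdvd : g ∣ pderiv i g :=
      hrel.dvd_of_dvd_mul_left ⟨_, (hcancel i).symm.trans (mul_comm _ _)⟩
    exact (totalDegree_pderiv_lt hne).not_ge (totalDegree_le_of_dvd_of_isDomain hdvd hne)
  have he' : ∀ i, pderiv i e = 0 := fun i => by
    simpa [hg', hg] using hcancel i
  have hg0 : coeff 0 g ≠ 0 := fun h0 => hg (by rw [eq_C_of_pderiv_eq_zero hg', h0, C_0])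
  refine ⟨coeff 0 e / coeff 0 g, ?_⟩
  rw [eq_C_of_pderiv_eq_zero hg', eq_C_of_pderiv_eq_zero he', coeff_C, coeff_C, if_pos rfl,
    if_pos rfl, mul_left_comm, ← C_mul, div_mul_cancel₀ _ hg0]

end Wronskian

/-! ### Polynomials whose partial derivatives have separable ratios -/

section Compatible

variable {K σ : Type*} [Field K]

/-- The polynomials all of whose quotients `∂ᵢF / ∂ⱼF` equal `(cᵢ / aᵢ) / (cⱼ / aⱼ)`, where `aᵢ` and
`cᵢ` are univariate polynomials in the `i`-th variable; denominators are cleared. -/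
def compatible (a c : σ → K[X]) : Submodule K (MvPolynomial σ K) where
  carrier := {F | ∀ i j, (a i).toMvPolynomial i * (c j).toMvPolynomial j * pderiv i F =
    (a j).toMvPolynomial j * (c i).toMvPolynomial i * pderiv j F}
  add_mem' hF hG i j := by
    rw [map_add, map_add, mul_add, mul_add, hF i j, hG i j]
  zero_mem' i j := by simp
  smul_mem' r F hF i j := by
    rw [Derivation.map_smul, Derivation.map_smul, mul_smul_comm, mul_smul_comm, hF i j]

/-- `H = (aᵢ / cᵢ) ∂ᵢF` for every `i`, with denominators cleared. -/
def Transports (a c : σ → K[X]) (F H : MvPolynomial σ K) : Prop :=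
  ∀ i, (c i).toMvPolynomial i * H = (a i).toMvPolynomial i * pderiv i F

variable {a c : σ → K[X]} {F F' G H : MvPolynomial σ K}

theorem exists_eq_mul_isCoprime (p : K[X]) {q : K[X]} (hq : q ≠ 0) :
    ∃ g p' q' : K[X], IsCoprime p' q' ∧ p = g * p' ∧ q = g * q' :=
  ⟨_, _, _, isCoprime_div_gcd_div_gcd (p := p) hq,
    (EuclideanDomain.mul_div_cancel' (gcd_ne_zero_of_right hq) (gcd_dvd_left p q)).symm,
    (EuclideanDomain.mul_div_cancel' (gcd_ne_zero_of_right hq) (gcd_dvd_right p q)).symm⟩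

theorem exists_isCoprime_mem_compatible (ha : ∀ i, a i ≠ 0) (hc : ∀ i, c i ≠ 0)
    (hF : F ∈ compatible a c) : ∃ a' c' : σ → K[X], (∀ i, a' i ≠ 0) ∧ (∀ i, c' i ≠ 0) ∧
      (∀ i, IsCoprime (a' i) (c' i)) ∧ F ∈ compatible a' c' := by
  choose g a' c' hco hag hcg using fun i => exists_eq_mul_isCoprime (a i) (hc i)
  have hg : ∀ i, g i ≠ 0 := fun i h => ha i (by rw [hag i, h, zero_mul])
  refine ⟨a', c', fun i h => ha i (by rw [hag i, h, mul_zero]),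
    fun i h => hc i (by rw [hcg i, h, mul_zero]), hco, fun i j => ?_⟩
  refine mul_left_cancel₀ (mul_ne_zero (toMvPolynomial_ne_zero (i := i) (hg i))
    (toMvPolynomial_ne_zero (i := j) (hg j))) ?_
  have h := hF i j
  rw [hag, hag, hcg, hcg, map_mul, map_mul, map_mul, map_mul] at h
  linear_combination h

theorem exists_transports [Nontrivial σ] (hc : ∀ i, c i ≠ 0) (hco : ∀ i, IsCoprime (a i) (c i))
    (hF : F ∈ compatible a c) : ∃ H, Transports a c F H := by
  obtain ⟨i, j, hij⟩ := exists_pair_ne σ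
  have hdvd : (c i).toMvPolynomial i ∣ pderiv i F := by
    have h : (c i).toMvPolynomial i ∣
        (a i).toMvPolynomial i * ((c j).toMvPolynomial j * pderiv i F) :=
      ⟨(a j).toMvPolynomial j * pderiv j F, by linear_combination hF i j⟩
    have hrel : IsRelPrime ((c i).toMvPolynomial i) ((a i).toMvPolynomial i) :=
      ((hco i).symm.map _).isRelPrime
    exact (isRelPrime_toMvPolynomial hij (hc i) (hc j)).dvd_of_dvd_mul_left
      (hrel.dvd_of_dvd_mul_left h)
  obtain ⟨Q, hQ⟩ := hdvd
  refine ⟨(a i).toMvPolynomial i * Q, fun k => ?_⟩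
  refine mul_left_cancel₀ (toMvPolynomial_ne_zero (i := i) (hc i)) ?_
  linear_combination hF i k - (c k).toMvPolynomial k * (a i).toMvPolynomial i * hQ

namespace Transports

theorem mem_compatible (h : Transports a c F H) : H ∈ compatible a c := by
  intro i j
  rcases eq_or_ne i j with rfl | hij
  · rfl
  have hpderiv : ∀ k l, k ≠ l → (c k).toMvPolynomial k * pderiv l H =
      (a k).toMvPolynomial k * pderiv l (pderiv k F) := fun k l hkl => by
    simpa [pderiv_toMvPolynomial_of_ne hkl] using congrArg (pderiv l) (h k)
  linear_combination (a i).toMvPolynomial i * hpderiv j i hij.symm -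
    (a j).toMvPolynomial j * hpderiv i j hij +
    (a i).toMvPolynomial i * (a j).toMvPolynomial j * pderiv_comm i j F

theorem unique [Nonempty σ] (hc : ∀ i, c i ≠ 0) (h : Transports a c F G)
    (h' : Transports a c F H) : G = H := by
  let i := Classical.arbitrary σ
  exact mul_left_cancel₀ (toMvPolynomial_ne_zero (hc i)) ((h i).trans (h' i).symm)

theorem aeval (h : Transports a c F H) (g : K[X]) :
    Transports a c (Polynomial.aeval F g)
      (Polynomial.aeval F (Polynomial.derivative g) * H) := fun i => by
  rw [Derivation.map_aeval, smul_eq_mul]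
  linear_combination Polynomial.aeval F (Polynomial.derivative g) * h i

theorem eq_add_C [CharZero K] (ha : ∀ i, a i ≠ 0) (h : Transports a c F H)
    (h' : Transports a c F' H) : ∃ r, F = F' + C r := by
  refine ⟨coeff 0 (F - F'), sub_eq_iff_eq_add'.1 (eq_C_of_pderiv_eq_zero fun i => ?_)⟩
  rw [map_sub, sub_eq_zero]
  exact mul_left_cancel₀ (toMvPolynomial_ne_zero (ha i)) ((h i).symm.trans (h' i))

theorem degreeOf_le [Nontrivial σ] (ha : ∀ i, a i ≠ 0) (hc : ∀ i, c i ≠ 0)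
    (h : Transports a c F H) (j : σ) : degreeOf j H ≤ degreeOf j F := by
  obtain ⟨i, hij⟩ := exists_ne j
  rcases eq_or_ne H 0 with rfl | hH
  · simp
  have hF : pderiv i F ≠ 0 := fun h0 => by
    have := h i
    rw [h0, mul_zero] at this
    exact mul_ne_zero (toMvPolynomial_ne_zero (hc i)) hH this
  have hdeg := congrArg (degreeOf j) (h i)
  rw [degreeOf_mul_eq (toMvPolynomial_ne_zero (hc i)) hH,
    degreeOf_mul_eq (toMvPolynomial_ne_zero (ha i)) hF, degreeOf_toMvPolynomial_of_ne hij.symm,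
    degreeOf_toMvPolynomial_of_ne hij.symm, zero_add, zero_add] at hdeg
  exact hdeg.trans_le (degreeOf_pderiv_le j i F)

theorem natDegree_le [CharZero K] [Nontrivial σ] (ha : ∀ i, a i ≠ 0) (hc : ∀ i, c i ≠ 0)
    (h : Transports a c F H) {j : σ} (hF : pderiv j F ≠ 0) :
    (a j).natDegree ≤ (c j).natDegree + 1 := by
  have hH : H ≠ 0 := by
    rintro rfl
    have := h j
    rw [mul_zero, eq_comm] at this
    exact mul_ne_zero (toMvPolynomial_ne_zero (ha j)) hF this
  have hdeg := congrArg (degreeOf j) (h j)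
  rw [degreeOf_mul_eq (toMvPolynomial_ne_zero (hc j)) hH,
    degreeOf_mul_eq (toMvPolynomial_ne_zero (ha j)) hF, degreeOf_toMvPolynomial,
    degreeOf_toMvPolynomial] at hdeg
  have := h.degreeOf_le ha hc j
  have := degreeOf_le_degreeOf_pderiv_add_one j F
  lia

theorem leadingCoeff_mul_coeff (h : Transports a c F H) {j : σ}
    (hj : (a j).natDegree ≤ (c j).natDegree + 1) {m : σ →₀ ℕ} (hF : degreeOf j F ≤ m j)
    (hH : degreeOf j H ≤ m j) :
    (c j).leadingCoeff * coeff m H =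
      (a j).coeff ((c j).natDegree + 1) * (m j * coeff m F) := by
  rw [Polynomial.leadingCoeff, ← coeff_toMvPolynomial_mul le_rfl hH, h j]
  rcases Nat.eq_zero_or_pos (m j) with h0 | hpos
  · rw [pderiv_eq_zero_of_degreeOf_eq_zero (by lia), mul_zero, coeff_zero, h0]
    simp
  have hm : m - Finsupp.single j 1 + Finsupp.single j 1 = m :=
    tsub_add_cancel_of_le (Finsupp.single_le_iff.2 hpos)
  have hpderiv : degreeOf j (pderiv j F) ≤ (m - Finsupp.single j 1 : σ →₀ ℕ) j := by
    have := degreeOf_pderiv_self_le j F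
    simp only [Finsupp.tsub_apply, Finsupp.single_eq_same]
    lia
  have hsplit : m + Finsupp.single j (c j).natDegree =
      m - Finsupp.single j 1 + Finsupp.single j ((c j).natDegree + 1) := by
    rw [add_comm _ 1, Finsupp.single_add, ← add_assoc, hm]
  have hcast : ((m j - 1 : ℕ) : K) + 1 = m j := by
    exact_mod_cast congrArg Nat.cast (Nat.sub_add_cancel hpos)
  rw [hsplit, coeff_toMvPolynomial_mul hj hpderiv, coeff_pderiv, hm, Finsupp.tsub_apply,
    Finsupp.single_eq_same, hcast, mul_comm (coeff m F)]

end Transports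

theorem exists_transport_linearMap [Nontrivial σ] (hc : ∀ i, c i ≠ 0)
    (hco : ∀ i, IsCoprime (a i) (c i)) :
    ∃ D : Module.End K (compatible a c), ∀ F, Transports a c F.1 (D F).1 := by
  choose D hD using fun F : compatible a c => exists_transports hc hco F.2
  refine ⟨{ toFun := fun F => ⟨D F, (hD F).mem_compatible⟩, map_add' := ?_, map_smul' := ?_ }, hD⟩
  · refine fun F G => Subtype.ext ((hD _).unique hc fun i => ?_)
    simp only [Submodule.coe_add, mul_add, map_add]
    rw [hD F i, hD G i]
  · refine fun r F => Subtype.ext ((hD _).unique hc fun i => ?_)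
    simp only [SetLike.val_smul, RingHom.id_apply, mul_smul_comm]
    rw [Derivation.map_smul, mul_smul_comm, hD F i]

variable {D : Module.End K (compatible a c)}

theorem aeval_prod_eq_zero [Nontrivial σ] (ha : ∀ i, a i ≠ 0) (hc : ∀ i, c i ≠ 0)
    (hD : ∀ F, Transports a c F.1 (D F).1) {j : σ} {μ : K}
    (hj : (a j).natDegree ≤ (c j).natDegree + 1)
    (hμ : (a j).coeff ((c j).natDegree + 1) = (c j).leadingCoeff * μ) (N : ℕ)
    (F : compatible a c) (hF : ∀ m ∈ F.1.support, m j < N) :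
    Polynomial.aeval D (∏ k ∈ Finset.range N, (Polynomial.X - Polynomial.C (k * μ))) F = 0 := by
  induction N generalizing F with
  | zero =>
    have : F.1 = 0 := support_eq_empty.1 <| Finset.eq_empty_of_forall_notMem fun m hm =>
      (hF m hm).not_ge (Nat.zero_le _)
    simpa using this
  | succ N ih =>
    rw [Finset.prod_range_succ, map_mul, Module.End.mul_apply]
    refine ih _ fun m hm => ?_
    have hdegF : degreeOf j F.1 ≤ N := degreeOf_le_iff.2 fun m hm => Nat.lt_succ_iff.1 (hF m hm)
    have hdegD : degreeOf j (D F).1 ≤ N := ((hD F).degreeOf_le ha hc j).trans hdegF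
    have hval : (Polynomial.aeval D (Polynomial.X - Polynomial.C (N * μ)) F).1 =
        (D F).1 - C (N * μ) * F.1 := by
      simp only [map_sub, Polynomial.aeval_X, Polynomial.aeval_C, LinearMap.sub_apply,
        Module.algebraMap_end_apply, Submodule.coe_sub, SetLike.val_smul, smul_eq_C_mul]
    rw [hval] at hm
    have hle : m j ≤ N := by
      refine (monomial_le_degreeOf j hm).trans ((degreeOf_sub_le _ _ _).trans ?_)
      exact max_le hdegD ((degreeOf_C_mul_le _ _ _).trans hdegF)
    refine hle.lt_of_ne fun hmN => mem_support_iff.1 hm ?_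
    refine mul_left_cancel₀ (Polynomial.leadingCoeff_ne_zero.2 (hc j)) ?_
    have hcoeff := (hD F).leadingCoeff_mul_coeff hj (hdegF.trans hmN.ge) (hdegD.trans hmN.ge)
    rw [hμ, hmN] at hcoeff
    rw [coeff_sub, coeff_C_mul, mul_sub, hcoeff]
    ring

theorem exists_aeval_prod_eq_zero [CharZero K] [Nontrivial σ] (ha : ∀ i, a i ≠ 0)
    (hc : ∀ i, c i ≠ 0) (hD : ∀ F, Transports a c F.1 (D F).1) {F₀ : compatible a c} {j : σ}
    (hF₀ : pderiv j F₀.1 ≠ 0) : ∃ μ : K, ∀ F, ∃ N : ℕ,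
      Polynomial.aeval D (∏ k ∈ Finset.range N, (Polynomial.X - Polynomial.C (k * μ))) F = 0 :=
  ⟨(a j).coeff ((c j).natDegree + 1) / (c j).leadingCoeff, fun F => ⟨degreeOf j F.1 + 1,
    aeval_prod_eq_zero ha hc hD ((hD F₀).natDegree_le ha hc hF₀)
      (mul_div_cancel₀ _ (Polynomial.leadingCoeff_ne_zero.2 (hc j))).symm _ F
      fun _ hm => Nat.lt_succ_iff.2 (monomial_le_degreeOf j hm)⟩⟩

end Compatible

/-! ### Additive and multiplicative forms -/

section SpecialForm

variable {K σ : Type*} [Field K]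

/-- The polynomials `g(∑ᵢ hᵢ(xᵢ))` and `g(∏ᵢ hᵢ(xᵢ))` with univariate `g` and `hᵢ`, that is, the
exceptional polynomials of the expansion theorems. -/
def HasSpecialForm [Fintype σ] (f : MvPolynomial σ K) : Prop :=
  ∃ (g : K[X]) (h : σ → K[X]), f = Polynomial.aeval (∑ i, (h i).toMvPolynomial i) g ∨
    f = Polynomial.aeval (∏ i, (h i).toMvPolynomial i) g

namespace HasSpecialForm

theorem of_forall_pderiv_eq_zero [Fintype σ] [CharZero K] {f : MvPolynomial σ K}
    (h : ∀ i, pderiv i f = 0) : HasSpecialForm f :=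
  ⟨Polynomial.C (coeff 0 f), 0, .inl <| by
    rw [Polynomial.aeval_C, algebraMap_eq]; exact eq_C_of_pderiv_eq_zero h⟩

theorem of_sum_add_C [Fintype σ] (g : K[X]) (h : σ → K[X]) (r : K) :
    HasSpecialForm (Polynomial.aeval (∑ i, (h i).toMvPolynomial i + C r) g) :=
  ⟨g.comp (Polynomial.X + Polynomial.C r), h, .inl <| by simp [Polynomial.aeval_comp]⟩

theorem of_C_mul_prod [Fintype σ] (g : K[X]) (h : σ → K[X]) (r : K) :
    HasSpecialForm (Polynomial.aeval (C r * ∏ i, (h i).toMvPolynomial i) g) :=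
  ⟨g.comp (Polynomial.C r * Polynomial.X), h, .inr <| by simp [Polynomial.aeval_comp]⟩

end HasSpecialForm

theorem exists_derivative_eq [CharZero K] (q : K[X]) : ∃ g : K[X], Polynomial.derivative g = q := by
  induction q using Polynomial.induction_on' with
  | add p q hp hq =>
    obtain ⟨g, rfl⟩ := hp
    obtain ⟨g', rfl⟩ := hq
    exact ⟨g + g', Polynomial.derivative_add⟩
  | monomial n r =>
    refine ⟨Polynomial.monomial (n + 1) (r / (n + 1)), ?_⟩
    rw [Polynomial.derivative_monomial, Nat.cast_add_one, div_mul_cancel₀ _ n.cast_add_one_ne_zero,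
      Nat.add_sub_cancel]

theorem exists_eval_ne_zero [Infinite K] {f : MvPolynomial σ K} (hf : f ≠ 0) :
    ∃ v, eval v f ≠ 0 := by
  by_contra! h
  exact hf (MvPolynomial.funext fun v => by rw [h, map_zero])

theorem mem_of_aeval_prod_eq_zero {V ι : Type*} [AddCommGroup V] [Module K V] {D : Module.End K V}
    {S : Submodule K V} {x : ι → K} (hx : Function.Injective x)
    (hS : ∀ k v, D v = x k • v → v ∈ S) (s : Finset ι) {v : V}
    (hv : Polynomial.aeval D (∏ k ∈ s, (Polynomial.X - Polynomial.C (x k))) v = 0) : v ∈ S := by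
  induction s using Finset.induction_on generalizing v with
  | empty => simp [show v = 0 by simpa using hv]
  | insert k s hk ih =>
    have hco : IsCoprime (Polynomial.X - Polynomial.C (x k))
        (∏ l ∈ s, (Polynomial.X - Polynomial.C (x l))) := IsCoprime.prod_right fun l hl =>
      Polynomial.pairwise_coprime_X_sub_C hx (ne_of_mem_of_not_mem hl hk).symm
    rw [Finset.prod_insert hk, ← LinearMap.mem_ker,
      ← Polynomial.sup_ker_aeval_eq_ker_aeval_mul_of_coprime D hco] at hv
    obtain ⟨u, hu, w, hw, rfl⟩ := Submodule.mem_sup.1 hv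
    have hu' : D u = x k • u := by simpa [sub_eq_zero] using hu
    exact S.add_mem (hS k u hu') (ih (LinearMap.mem_ker.1 hw))

variable {a c : σ → K[X]} {D : Module.End K (compatible a c)}

namespace Transports

variable {E F G p w : MvPolynomial σ K} {s t : K}

theorem exists_eq_sum_add_C [Fintype σ] [CharZero K] (ha : ∀ i, a i ≠ 0)
    (h : Transports a c p 1) :
    ∃ (φ : σ → K[X]) (r : K), p = ∑ i, (φ i).toMvPolynomial i + C r := by
  refine ⟨fun i => slice 0 i p, h.eq_add_C (H := 1) ha fun i => ?_⟩
  have hslice := congrArg (slice 0 i) (h i)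
  rw [mul_one, map_mul, slice_toMvPolynomial, slice_toMvPolynomial, ← derivative_slice] at hslice
  rw [map_sum, Finset.sum_eq_single i (fun j _ hj => pderiv_toMvPolynomial_of_ne hj _) (by simp),
    pderiv_toMvPolynomial, mul_one, hslice, map_mul]

theorem exists_eq_aeval [Nonempty σ] [CharZero K] (ha : ∀ i, a i ≠ 0)
    (hD : ∀ F, Transports a c F.1 (D F).1) (hp : Transports a c p 1) {N : ℕ}
    {F : compatible a c} (hF : (D ^ N) F = 0) : ∃ g : K[X], F.1 = Polynomial.aeval p g := by
  induction N generalizing F with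
  | zero => exact ⟨0, by rw [map_zero, show F = 0 from hF, Submodule.coe_zero]⟩
  | succ N ih =>
    obtain ⟨g, hg⟩ := ih (F := D F) (by rwa [pow_succ] at hF)
    obtain ⟨G, rfl⟩ := exists_derivative_eq g
    have hG := hp.aeval G
    rw [mul_one, ← hg] at hG
    obtain ⟨r, hr⟩ := (hD F).eq_add_C ha hG
    exact ⟨G + Polynomial.C r, by rw [hr, map_add, Polynomial.aeval_C, algebraMap_eq]⟩

protected theorem pow (h : Transports a c E (C s * E)) (n : ℕ) :
    Transports a c (E ^ n) (C (n * s) * E ^ n) := fun i => by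
  rcases n with _ | n
  · simp
  · rw [pderiv_pow, Nat.add_sub_cancel, pow_succ, C_mul, map_natCast]
    linear_combination ((n + 1 : ℕ) : MvPolynomial σ K) * E ^ n * h i

theorem of_mul (hE : E ≠ 0) (h : Transports a c E (C s * E))
    (h' : Transports a c (E * G) (C t * (E * G))) : Transports a c G (C (t - s) * G) := fun i => by
  refine mul_left_cancel₀ hE ?_
  have hi := h' i
  rw [pderiv_mul] at hi
  rw [C_sub]
  linear_combination hi - G * h i

variable [CharZero K]

theorem exists_eq_C_mul (ha : ∀ i, a i ≠ 0) (hG : G ≠ 0) (h : Transports a c E (C s * E))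
    (h' : Transports a c G (C s * G)) : ∃ r, E = C r * G :=
  eq_C_mul_of_forall_pderiv_mul_eq hG fun i =>
    mul_left_cancel₀ (toMvPolynomial_ne_zero (i := i) (ha i)) <| by
      linear_combination E * h' i - G * h i

theorem dvd (ha : ∀ i, a i ≠ 0) {j k : ℕ} (hj : j ≠ 0) (hjk : j ≤ k) (hw : w ≠ 0)
    (h : Transports a c w (C (j * s) * w)) (h' : Transports a c E (C (k * s) * E)) : w ∣ E := by
  have hpow := h'.pow j
  rw [mul_left_comm] at hpow
  obtain ⟨r, hr⟩ := exists_eq_C_mul ha (pow_ne_zero k hw) hpow (h.pow k)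
  rw [← IsIntegrallyClosed.pow_dvd_pow_iff hj, hr]
  exact (pow_dvd_pow w hjk).mul_left _

theorem mem_range_aeval (ha : ∀ i, a i ≠ 0) {j : ℕ} (hj : j ≠ 0) (hw : w ≠ 0)
    (h : Transports a c w (C (j * s) * w))
    (hmin : ∀ k ≠ 0, k < j → ∀ E, Transports a c E (C (k * s) * E) → E = 0)
    {k : ℕ} (hE : Transports a c E (C (k * s) * E)) :
    E ∈ (Polynomial.aeval (R := K) w).range := by
  induction k using Nat.strong_induction_on generalizing E with
  | _ k ih =>
    rcases eq_or_ne k 0 with rfl | hk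
    · obtain ⟨r, hr⟩ := exists_eq_C_mul ha one_ne_zero hE (fun i => by simp)
      exact ⟨Polynomial.C r, by simp [hr]⟩
    rcases lt_or_ge k j with hkj | hjk
    · rw [hmin k hk hkj E hE]
      exact zero_mem _
    obtain ⟨G, rfl⟩ := dvd ha hj hjk hw h hE
    have hG := h.of_mul hw hE
    rw [← sub_mul, ← Nat.cast_sub hjk] at hG
    exact mul_mem ⟨Polynomial.X, Polynomial.aeval_X w⟩ (ih (k - j) (by lia) hG)

theorem exists_eq_C_mul_prod [Fintype σ] (ha : ∀ i, a i ≠ 0) (hw : w ≠ 0)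
    (h : Transports a c w (C s * w)) :
    ∃ (φ : σ → K[X]) (r : K), w = C r * ∏ i, (φ i).toMvPolynomial i := by
  obtain ⟨O, hO⟩ := exists_eval_ne_zero hw
  have hφ : ∀ i, slice O i w ≠ 0 := fun i h0 => hO <| by
    rw [← eval_slice_self O i, h0, Polynomial.eval_zero]
  refine ⟨fun i => slice O i w, h.exists_eq_C_mul ha
    (Finset.prod_ne_zero_iff.2 fun i _ => toMvPolynomial_ne_zero (hφ i)) fun i => ?_⟩
  have hslice := congrArg (Polynomial.toMvPolynomial i) (congrArg (slice O i) (h i))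
  have hC : slice O i (C s) = Polynomial.C s := (slice O i).commutes s
  simp only [map_mul, slice_toMvPolynomial, ← derivative_slice, hC,
    Polynomial.toMvPolynomial_C] at hslice
  have hrest : pderiv i (∏ j ∈ Finset.univ.erase i, (slice O j w).toMvPolynomial j) = 0 :=
    Finset.prod_induction _ (pderiv i · = 0) (fun p q hp hq => by simp [hp, hq])
      (by simp) fun j hj => pderiv_toMvPolynomial_of_ne (Finset.ne_of_mem_erase hj) _
  rw [← Finset.mul_prod_erase _ _ (Finset.mem_univ i), pderiv_mul, hrest, pderiv_toMvPolynomial]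
  linear_combination
    (∏ j ∈ Finset.univ.erase i, (slice O j w).toMvPolynomial j) * hslice

end Transports

theorem exists_transports_one [CharZero K] (ha : ∀ i, a i ≠ 0)
    (hD : ∀ F, Transports a c F.1 (D F).1) {F : compatible a c} {j : σ} (hF : pderiv j F.1 ≠ 0)
    {N : ℕ} (hN : (D ^ N) F = 0) : ∃ p, Transports a c p 1 := by
  induction N generalizing F j with
  | zero => simp [show F = 0 from hN] at hF
  | succ N ih =>
    by_cases hDF : ∃ j, pderiv j (D F).1 ≠ 0
    · obtain ⟨j, hj⟩ := hDF
      exact ih (F := D F) hj (by rwa [pow_succ] at hN)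
    push Not at hDF
    have hr := eq_C_of_pderiv_eq_zero hDF
    set r := coeff 0 (D F).1
    have hF_r := hD F
    rw [hr] at hF_r
    have hr0 : r ≠ 0 := fun h0 => by
      have hj := hF_r j
      rw [h0, C_0, mul_zero, eq_comm] at hj
      exact mul_ne_zero (toMvPolynomial_ne_zero (ha j)) hF hj
    refine ⟨C r⁻¹ * F.1, fun i => ?_⟩
    rw [pderiv_C_mul, mul_one, mul_left_comm, ← hF_r i, mul_left_comm, ← C_mul,
      inv_mul_cancel₀ hr0, C_1, mul_one]

theorem hasSpecialForm_of_pow_eq_zero [Fintype σ] [Nonempty σ] [CharZero K] (ha : ∀ i, a i ≠ 0)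
    (hD : ∀ F, Transports a c F.1 (D F).1) (hnil : ∀ F, ∃ N : ℕ, (D ^ N) F = 0)
    {F : compatible a c} {j : σ} (hF : pderiv j F.1 ≠ 0) : HasSpecialForm F.1 := by
  obtain ⟨N, hN⟩ := hnil F
  obtain ⟨p, hp⟩ := exists_transports_one ha hD hF hN
  obtain ⟨g, hg⟩ := hp.exists_eq_aeval ha hD hN
  obtain ⟨φ, r, rfl⟩ := hp.exists_eq_sum_add_C ha
  exact hg ▸ .of_sum_add_C g φ r

theorem hasSpecialForm_of_aeval_prod_eq_zero [Fintype σ] [CharZero K]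
    (ha : ∀ i, a i ≠ 0) (hD : ∀ F, Transports a c F.1 (D F).1) {μ : K} (hμ : μ ≠ 0)
    {F : compatible a c} {N : ℕ}
    (hN : Polynomial.aeval D
      (∏ k ∈ Finset.range N, (Polynomial.X - Polynomial.C ((k : K) * μ))) F = 0) :
    HasSpecialForm F.1 := by
  have hmem : ∀ S : Submodule K (MvPolynomial σ K),
      (∀ (k : ℕ) E, Transports a c E (C (k * μ) * E) → E ∈ S) → F.1 ∈ S := fun S hS =>
    mem_of_aeval_prod_eq_zero (S := S.comap (compatible a c).subtype)
      (x := fun k : ℕ => (k : K) * μ) (fun k l h => Nat.cast_injective (mul_right_cancel₀ hμ h))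
      (fun k v hv => hS k _ (by simpa [hv, smul_eq_C_mul] using hD v)) _ hN
  by_cases hex : ∃ k : ℕ, k ≠ 0 ∧ ∃ w, w ≠ 0 ∧ Transports a c w (C (k * μ) * w)
  · obtain ⟨hj, w, hw, h⟩ := Nat.find_spec hex
    obtain ⟨g, hg⟩ := hmem (Subalgebra.toSubmodule (Polynomial.aeval (R := K) w).range)
      fun k E hE => h.mem_range_aeval ha hj hw
        (fun k hk hlt E hE => by_contra fun hE0 => Nat.find_min hex hlt ⟨hk, E, hE0, hE⟩) hE
    obtain ⟨φ, r, rfl⟩ := h.exists_eq_C_mul_prod ha hw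
    exact hg ▸ .of_C_mul_prod g φ r
  · push Not at hex
    refine .of_forall_pderiv_eq_zero fun i => hmem (LinearMap.ker (pderiv i).toLinearMap) ?_
    intro k E hE
    rcases eq_or_ne k 0 with rfl | hk
    · obtain ⟨r, rfl⟩ := hE.exists_eq_C_mul ha one_ne_zero (fun i => by simp)
      simp
    · rw [by_contra fun hE0 => hex k hk E hE0 hE]
      exact zero_mem _

theorem hasSpecialForm_of_mem_compatible [Fintype σ] [Nontrivial σ] [CharZero K]
    (ha : ∀ i, a i ≠ 0) (hc : ∀ i, c i ≠ 0) {F : MvPolynomial σ K} (hF : F ∈ compatible a c) :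
    HasSpecialForm F := by
  by_cases hconst : ∀ i, pderiv i F = 0
  · exact .of_forall_pderiv_eq_zero hconst
  push Not at hconst
  obtain ⟨j, hj⟩ := hconst
  obtain ⟨a, c, ha, hc, hco, hF⟩ := exists_isCoprime_mem_compatible ha hc hF
  obtain ⟨D, hD⟩ := exists_transport_linearMap hc hco
  obtain ⟨μ, hμ⟩ := exists_aeval_prod_eq_zero ha hc hD (F₀ := ⟨F, hF⟩) hj
  rcases eq_or_ne μ 0 with rfl | hμ0
  · exact hasSpecialForm_of_pow_eq_zero (F := ⟨F, hF⟩) ha hD (fun G => by simpa using hμ G) hj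
  · obtain ⟨N, hN⟩ := hμ ⟨F, hF⟩
    exact hasSpecialForm_of_aeval_prod_eq_zero ha hD hμ0 hN

end SpecialForm

/-! ### Separated quotients of partial derivatives -/

section Ratio

variable {K σ τ : Type*}

theorem cross_mul_eq_of_ratio {R : Type*} [CommRing R] {p : σ → (σ → K) → R}
    (hratio : ∀ i j v w, v i = w i → v j = w j → p i v * p j w = p i w * p j v)
    {i j l i' j' : σ} (hli : l ≠ i) (hlj : l ≠ j) (hi' : i' ≠ i) (hj' : j' ≠ j) {O v w : σ → K}
    (hwi : w i = v i) (hwj : w j = v j) (hwl : w l = O l) :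
    p l O * (p i' (Function.update O i (v i)) * (p j' O * p j (Function.update O j (v j))) * p i v *
      (p j w * p l w)) =
    p l O * (p j' (Function.update O j (v j)) * (p i' O * p i (Function.update O i (v i))) * p j v *
      (p j w * p l w)) := by
  set vi := Function.update O i (v i)
  set vj := Function.update O j (v j)
  have hij := hratio i j v w hwi.symm hwj.symm
  have hil := hratio i l w vi (by simp [vi, hwi]) (by simp [vi, hwl, hli])
  have hjl := hratio j l w vj (by simp [vj, hwj]) (by simp [vj, hwl, hlj])
  have hil' := hratio i' l vi O (by simp [vi, hi']) (by simp [vi, hli])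
  have hjl' := hratio j' l vj O (by simp [vj, hj']) (by simp [vj, hlj])
  linear_combination p j' O * p j vj * p i v * p j w * p l w * hil' -
    p i' O * p i vi * p j v * p j w * p l w * hjl' + p i' O * p j' O *
    (p l vi * p j vj * p l w * hij - p l vi * p i w * p j v * hjl + p j v * p j w * p l vj * hil)

variable [Field K]

theorem eval_aeval (F : σ → MvPolynomial τ K) (P : MvPolynomial σ K) (v : τ → K) :
    eval v (aeval F P) = eval (fun i => eval v (F i)) P := by
  have h : (eval v).comp (aeval F : MvPolynomial σ K →ₐ[K] _).toRingHom =
      eval (fun i => eval v (F i)) := by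
    ext <;> simp
  exact DFunLike.congr_fun h P

theorem eq_of_eval_mul_eq [Infinite K] {P Q R : MvPolynomial σ K} (hR : R ≠ 0)
    (h : ∀ v, eval v P * eval v R = eval v Q * eval v R) : P = Q :=
  mul_right_cancel₀ hR <| MvPolynomial.funext fun v => by rw [map_mul, map_mul, h v]

theorem slice_ne_zero {O : σ → K} {f : MvPolynomial σ K} (h : eval O f ≠ 0) (i : σ) :
    slice O i f ≠ 0 := fun h0 => h <| by
  rw [← eval_slice_self O i, h0, Polynomial.eval_zero]

theorem HasSpecialForm.of_unique [Unique σ] (f : MvPolynomial σ K) : HasSpecialForm f := by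
  have hslice : (Polynomial.aeval (X default)).comp (slice 0 default) =
      AlgHom.id K (MvPolynomial σ K) := algHom_ext fun i => by
    simp [slice, Subsingleton.elim i default]
  exact ⟨slice 0 default f, fun _ => Polynomial.X, .inl <| by
    simpa using (DFunLike.congr_fun hslice f).symm⟩

theorem HasSpecialForm.rename [Fintype σ] [Fintype τ] {e : σ → τ} (he : Function.Injective e)
    {f : MvPolynomial σ K} (hf : HasSpecialForm f) : HasSpecialForm (rename e f) := by
  obtain ⟨g, h, rfl | rfl⟩ := hf
  · refine ⟨g, Function.extend e h 0, .inl ?_⟩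
    rw [← Polynomial.aeval_algHom_apply, map_sum]
    congr 2
    exact Fintype.sum_of_injective e he _ _
      (fun j hj => by simp [Function.extend_apply' h (0 : τ → K[X]) j (by simpa using hj)])
      (fun i => by rw [rename_toMvPolynomial, he.extend_apply])
  · refine ⟨g, Function.extend e h 1, .inr ?_⟩
    rw [← Polynomial.aeval_algHom_apply, map_prod]
    congr 2
    exact Fintype.prod_of_injective e he _ _
      (fun j hj => by simp [Function.extend_apply' h (1 : τ → K[X]) j (by simpa using hj)])
      (fun i => by rw [rename_toMvPolynomial, he.extend_apply])

theorem hasSpecialForm_of_pderiv_ratio [Fintype σ] [CharZero K] {f : MvPolynomial σ K}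
    (hcard : 2 < Fintype.card σ) (hf : ∀ i, pderiv i f ≠ 0)
    (hratio : ∀ i j v w, v i = w i → v j = w j →
      eval v (pderiv i f) * eval w (pderiv j f) = eval w (pderiv i f) * eval v (pderiv j f)) :
    HasSpecialForm f := by
  have : Nontrivial σ := Fintype.one_lt_card_iff_nontrivial.1 (by lia)
  choose next hnext using fun i : σ => exists_ne i
  obtain ⟨O, hO⟩ := exists_eval_ne_zero (Finset.prod_ne_zero_iff.2 fun i (_ : i ∈ Finset.univ) =>
    hf i)
  replace hO : ∀ i, eval O (pderiv i f) ≠ 0 := by simpa [Finset.prod_eq_zero_iff] using hO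
  refine hasSpecialForm_of_mem_compatible (a := fun i => slice O i (pderiv (next i) f))
    (c := fun i => Polynomial.C (eval O (pderiv (next i) f)) * slice O i (pderiv i f))
    (fun i => slice_ne_zero (hO _) i)
    (fun i => mul_ne_zero (Polynomial.C_ne_zero.2 (hO _)) (slice_ne_zero (hO i) i)) fun i j => ?_
  rcases eq_or_ne i j with rfl | _
  · rfl
  obtain ⟨l, hli, hlj⟩ : ∃ l, l ≠ i ∧ l ≠ j := by
    obtain ⟨l, hl⟩ := Finset.exists_mem_notMem_of_card_lt_card (s := {i, j}) (t := Finset.univ)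
      (Finset.card_le_two.trans_lt hcard)
    exact ⟨l, by simpa using hl⟩
  let W : σ → MvPolynomial σ K := fun k => if k = i ∨ k = j then X k else C (O k)
  have hW : (aeval W (pderiv j f * pderiv l f) : MvPolynomial σ K) ≠ 0 := fun h0 => by
    have h := congrArg (eval O) h0
    rw [eval_aeval, show (fun k => eval O (W k)) = O by ext k; simp only [W]; split_ifs <;> simp,
      map_mul, map_zero] at h
    exact mul_ne_zero (hO j) (hO l) h
  refine eq_of_eval_mul_eq hW fun v => mul_left_cancel₀ (hO l) ?_
  set w : σ → K := fun k => eval v (W k) with hw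
  have hwi : w i = v i := by simp [hw, W]
  have hwj : w j = v j := by simp [hw, W]
  have hwl : w l = O l := by simp [hw, W, hli, hlj]
  simpa only [eval_aeval, map_mul, eval_toMvPolynomial, eval_slice, Polynomial.toMvPolynomial_C,
    eval_C, ← hw] using cross_mul_eq_of_ratio hratio hli hlj (hnext i) (hnext j) hwi hwj hwl

theorem hasSpecialForm_of_pderiv_cross_ratio [CharZero K] {f : MvPolynomial (Fin 2) K}
    (h₀ : pderiv 0 f ≠ 0) (h₁ : pderiv 1 f ≠ 0)
    (hratio : ∀ v w, eval v (pderiv 0 f) * eval w (pderiv 0 f) *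
        (eval ![v 0, w 1] (pderiv 1 f) * eval ![w 0, v 1] (pderiv 1 f)) =
      eval ![v 0, w 1] (pderiv 0 f) * eval ![w 0, v 1] (pderiv 0 f) *
        (eval v (pderiv 1 f) * eval w (pderiv 1 f))) :
    HasSpecialForm f := by
  obtain ⟨O, hO⟩ := exists_eval_ne_zero (mul_ne_zero h₀ h₁)
  rw [map_mul] at hO
  have hO₀ := left_ne_zero_of_mul hO
  have hO₁ := right_ne_zero_of_mul hO
  let a : Fin 2 → K[X] :=
    ![Polynomial.C (eval O (pderiv 0 f)) * slice O 0 (pderiv 1 f), slice O 1 (pderiv 0 f)]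
  let c : Fin 2 → K[X] :=
    ![Polynomial.C (eval O (pderiv 1 f)) * slice O 0 (pderiv 0 f), slice O 1 (pderiv 1 f)]
  have hcompat : (a 0).toMvPolynomial 0 * (c 1).toMvPolynomial 1 * pderiv 0 f =
      (a 1).toMvPolynomial 1 * (c 0).toMvPolynomial 0 * pderiv 1 f := by
    have hslice₀ (g : MvPolynomial (Fin 2) K) (t : K) :
        (slice O 0 g).eval t = eval ![t, O 1] g := by
      rw [eval_slice]; congr 2; ext k; fin_cases k <;> simp
    have hslice₁ (g : MvPolynomial (Fin 2) K) (t : K) :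
        (slice O 1 g).eval t = eval ![O 0, t] g := by
      rw [eval_slice]; congr 2; ext k; fin_cases k <;> simp
    refine MvPolynomial.funext fun v => ?_
    simp only [a, c, Matrix.cons_val_zero, Matrix.cons_val_one, map_mul, eval_toMvPolynomial,
      Polynomial.toMvPolynomial_C, eval_C, hslice₀, hslice₁]
    linear_combination hratio v O
  refine hasSpecialForm_of_mem_compatible (a := a) (c := c) ?_ ?_
    (Fin.forall_fin_two.2 ⟨Fin.forall_fin_two.2 ⟨rfl, hcompat⟩,
      Fin.forall_fin_two.2 ⟨hcompat.symm, rfl⟩⟩)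
  · simp [a, Fin.forall_fin_two, hO₀, slice_ne_zero hO₀, slice_ne_zero hO₁]
  · simp [c, Fin.forall_fin_two, hO₁, slice_ne_zero hO₀, slice_ne_zero hO₁]

end Ratio

/-! ### Proximity -/

section Proximity

variable {α ι : Type*} [LinearOrder α]

/-- The number of elements of `T` below `t`. -/
def rank (T : Finset α) (t : α) : ℕ := (T.filter (· < t)).card

/-- The number of elements of `T` between `t` and `u`, the smaller of which is included. -/
def gap (T : Finset α) (t u : α) : ℕ := (T.filter fun s => min t u ≤ s ∧ s < max t u).card

/-- The pairs of elements of `T` whose positions in `T` differ by at most `L`. -/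
def closePairs (T : Finset α) (L : ℕ) : Finset (α × α) :=
  (T ×ˢ T).filter fun q => gap T q.1 q.2 ≤ L

theorem gap_comm (T : Finset α) (t u : α) : gap T t u = gap T u t := by
  rw [gap, gap, min_comm, max_comm]

theorem rank_le_rank_add_gap (T : Finset α) (t u : α) : rank T u ≤ rank T t + gap T t u := by
  refine (Finset.card_le_card fun s hs => ?_).trans (Finset.card_union_le _ _)
  simp only [Finset.mem_union, Finset.mem_filter, lt_max_iff, min_le_iff] at hs ⊢
  rcases lt_or_ge s t with h | h
  · exact .inl ⟨hs.1, h⟩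
  · exact .inr ⟨hs.1, .inl h, .inr hs.2⟩

theorem rank_strictMonoOn (T : Finset α) : StrictMonoOn (rank T) T := fun t ht u _ htu =>
  Finset.card_lt_card <| Finset.ssubset_iff_of_subset
    (Finset.monotone_filter_right _ fun _ _ hs => hs.trans htu) |>.2
    ⟨t, by simpa using ⟨ht, htu⟩, by simp⟩

theorem card_closePairs_le (T : Finset α) (L : ℕ) :
    (closePairs T L).card ≤ T.card * (2 * L + 1) := by
  rw [mul_comm]
  refine Finset.card_le_mul_card_image_of_maps_to (f := Prod.fst)
    (fun q hq => (Finset.mem_product.1 (Finset.mem_filter.1 hq).1).1) _ fun t _ => ?_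
  refine (Finset.card_le_card_of_injOn (t := Finset.Icc (rank T t - L) (rank T t + L))
    (fun q => rank T q.2) (fun q hq => ?_) fun q hq q' hq' hrank => ?_).trans ?_
  · simp only [Finset.coe_filter, Finset.mem_filter, Set.mem_ofPred_eq] at hq
    have h := rank_le_rank_add_gap T q.1 q.2
    have h' := rank_le_rank_add_gap T q.2 q.1
    rw [gap_comm] at h'
    rw [hq.2] at h h'
    simp only [Finset.coe_Icc, Set.mem_Icc]
    lia
  · simp only [Finset.coe_filter, Finset.mem_filter, Finset.mem_product,
      Set.mem_ofPred_eq] at hq hq'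
    exact Prod.ext (hq.2.trans hq'.2.symm)
      ((rank_strictMonoOn T).injOn hq.1.1.2 hq'.1.1.2 hrank)
  · rw [Nat.card_Icc]
    lia

theorem sum_gap_eval_le {A : Finset ℝ} {π : ℝ → ℝ} {M : ℕ} (hπ : ∀ a ∈ A, a ≤ π a)
    (hM : ∀ r, (A.filter fun a => a ≤ r ∧ r ≤ π a).card ≤ M) (T : Finset ℝ) (p : ℝ[X]) :
    ∑ a ∈ A, gap T (p.eval a) (p.eval (π a)) ≤ T.card * (p.natDegree * M) := by
  simp only [gap, Finset.card_filter]
  rw [Finset.sum_comm]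
  refine Finset.sum_le_card_nsmul T _ _ fun s _ => ?_
  rw [← Finset.card_filter]
  rcases eq_or_ne p (Polynomial.C s) with rfl | hps
  · simp
  rw [← sub_ne_zero] at hps
  have hcover : (A.filter fun a => min (p.eval a) (p.eval (π a)) ≤ s ∧
      s < max (p.eval a) (p.eval (π a))) ⊆
      (p - Polynomial.C s).roots.toFinset.biUnion fun r => A.filter fun a => a ≤ r ∧ r ≤ π a := by
    intro a ha
    obtain ⟨haA, hmin, hmax⟩ := Finset.mem_filter.1 ha
    obtain ⟨r, hr, hrs⟩ := intermediate_value_uIcc (f := fun x => p.eval x)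
      p.continuous.continuousOn (show s ∈ Set.uIcc (p.eval a) (p.eval (π a)) from ⟨hmin, hmax.le⟩)
    rw [Set.uIcc_of_le (hπ a haA)] at hr
    refine Finset.mem_biUnion.2 ⟨r, ?_, Finset.mem_filter.2 ⟨haA, hr⟩⟩
    simpa [hps, sub_eq_zero] using hrs
  refine (Finset.card_le_card hcover).trans ((Finset.card_biUnion_le_card_mul _ _ M
    fun r _ => hM r).trans (Nat.mul_le_mul_right _ ?_))
  exact (Multiset.toFinset_card_le _).trans
    ((Polynomial.card_roots' _).trans_eq (Polynomial.natDegree_sub_C))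

theorem card_le_of_forall_least {s : Finset α} {k : ℕ}
    (h : ∀ a ∈ s, (∀ b ∈ s, a ≤ b) → s.card ≤ k) : s.card ≤ k := by
  rcases s.eq_empty_or_nonempty with rfl | hs
  · simp
  obtain ⟨a, ha, hle⟩ := Finset.exists_min_image s id hs
  exact h a ha hle

theorem exists_partner {A : Finset α} {bad : α → Finset α} {D : ℕ}
    (hbad : ∀ a ∈ A, (bad a).card ≤ D) :
    ∃ A' ⊆ A, A.card ≤ A'.card + (D + 1) ∧ ∃ π : α → α,
      (∀ a ∈ A', π a ∈ A ∧ a < π a ∧ π a ∉ bad a) ∧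
      ∀ r, (A'.filter fun a => a ≤ r ∧ r ≤ π a).card ≤ D + 2 := by
  set succs : α → Finset α := fun a => A.filter fun b => a < b ∧ b ∉ bad a with hsuccs
  set A' := A.filter fun a => (succs a).Nonempty
  have hmin : ∀ a, ∃ b, a ∈ A' → b ∈ succs a ∧ ∀ c ∈ succs a, b ≤ c := fun a => by
    by_cases ha : a ∈ A'
    · obtain ⟨b, hb, hle⟩ := Finset.exists_min_image (succs a) id (Finset.mem_filter.1 ha).2
      exact ⟨b, fun _ => ⟨hb, hle⟩⟩
    · exact ⟨a, fun h => absurd h ha⟩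
  choose π hπ using hmin
  have hinsert : ∀ {a : α}, a ∈ A → ∀ {s : Finset α}, s ⊆ insert a (bad a) → s.card ≤ D + 1 :=
    fun ha _ hs => (Finset.card_le_card hs).trans
      ((Finset.card_insert_le _ _).trans (Nat.add_le_add_right (hbad _ ha) 1))
  refine ⟨A', Finset.filter_subset _ _, ?_, π, fun a ha => ?_, fun r => ?_⟩
  · rw [← Finset.card_filter_add_card_filter_not (s := A) fun a => (succs a).Nonempty]
    refine Nat.add_le_add_left (card_le_of_forall_least fun μ hμ hle => ?_) _
    obtain ⟨hμA, hμs⟩ := Finset.mem_filter.1 hμ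
    refine hinsert hμA fun a ha => Finset.mem_insert.2 <| (hle a ha).eq_or_lt.imp Eq.symm
      fun hlt => ?_
    by_contra hab
    exact hμs ⟨a, Finset.mem_filter.2 ⟨(Finset.mem_filter.1 ha).1, hlt, hab⟩⟩
  · simpa [hsuccs] using (hπ a ha).1
  · -- Let `μ` be the least `a` whose interval `[a, π a]` contains `r`. Every other such `a` lies in
    -- `(μ, π μ]`, so by minimality of `π μ` it is `π μ` itself or bad for `μ`.
    refine card_le_of_forall_least fun μ hμ hle => ?_
    obtain ⟨hμA', -, hrμ⟩ := Finset.mem_filter.1 hμ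
    refine (Nat.sub_le_iff_le_add (b := 1) (c := D + 1)).1 <|
      (Finset.pred_card_le_card_erase (a := π μ)).trans <|
      hinsert (Finset.mem_filter.1 hμA').1 fun a ha => ?_
    obtain ⟨hne, ha⟩ := Finset.mem_erase.1 ha
    obtain ⟨haA', har, -⟩ := Finset.mem_filter.1 ha
    refine Finset.mem_insert.2 <| (hle a ha).eq_or_lt.imp Eq.symm fun hlt => ?_
    by_contra hab
    exact hne <| (har.trans hrμ).antisymm <| (hπ μ hμA').2 a <|
      Finset.mem_filter.2 ⟨(Finset.mem_filter.1 haA').1, hlt, hab⟩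

theorem card_filter_notMem_closePairs_mul_le {A : Finset ℝ} {π : ℝ → ℝ} {M d L : ℕ}
    {I : Finset ι} {p : ι → ℝ[X]} {T : Finset ℝ} (hπ : ∀ a ∈ A, a ≤ π a)
    (hM : ∀ r, (A.filter fun a => a ≤ r ∧ r ≤ π a).card ≤ M) (hp : ∀ i ∈ I, (p i).natDegree ≤ d)
    (hT : ∀ a ∈ A, ∀ i ∈ I, (p i).eval a ∈ T ∧ (p i).eval (π a) ∈ T) :
    ((A ×ˢ I).filter fun q =>
      ((p q.2).eval q.1, (p q.2).eval (π q.1)) ∉ closePairs T L).card * (L + 1) ≤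
        I.card * (T.card * (d * M)) := by
  set far := (A ×ˢ I).filter fun q => ((p q.2).eval q.1, (p q.2).eval (π q.1)) ∉ closePairs T L
  calc far.card * (L + 1) ≤ ∑ q ∈ far, gap T ((p q.2).eval q.1) ((p q.2).eval (π q.1)) := by
        rw [← smul_eq_mul]
        refine Finset.card_nsmul_le_sum _ _ _ fun q hq => ?_
        obtain ⟨hq, hfar⟩ := Finset.mem_filter.1 hq
        obtain ⟨ha, hi⟩ := Finset.mem_product.1 hq
        by_contra! hlt
        exact hfar <| Finset.mem_filter.2
          ⟨Finset.mem_product.2 (hT _ ha _ hi), Nat.lt_succ_iff.1 hlt⟩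
    _ ≤ ∑ q ∈ A ×ˢ I, gap T ((p q.2).eval q.1) ((p q.2).eval (π q.1)) :=
        Finset.sum_le_sum_of_subset (Finset.filter_subset _ _)
    _ = ∑ i ∈ I, ∑ a ∈ A, gap T ((p i).eval a) ((p i).eval (π a)) :=
        Finset.sum_product_right _ _ _
    _ ≤ ∑ _i ∈ I, T.card * (d * M) := Finset.sum_le_sum fun i hi =>
        (sum_gap_eval_le hπ hM T (p i)).trans
          (Nat.mul_le_mul_left _ (Nat.mul_le_mul_right _ (hp i hi)))
    _ = I.card * (T.card * (d * M)) := by rw [Finset.sum_const, smul_eq_mul]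

theorem exists_close_partners {A : Finset ℝ} {bad : ℝ → Finset ℝ} {D d n : ℕ}
    (hbad : ∀ a ∈ A, (bad a).card ≤ D) (hn : 0 < n) (hA : 3 * n + 4 * (D + 1) ≤ 4 * A.card)
    {T : Finset ℝ} {I : Finset ι} {p : ι → ℝ[X]} (hp : ∀ i ∈ I, (p i).natDegree ≤ d)
    (hT : ∀ a ∈ A, ∀ i ∈ I, (p i).eval a ∈ T) :
    ∃ A' ⊆ A, ∃ π : ℝ → ℝ, (∀ a ∈ A', π a ∈ A ∧ π a ∉ bad a) ∧ ∃ Q : Finset (ℝ × ℝ),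
      n * Q.card ≤ (8 * (d * (D + 2)) + 1) * (T.card * (T.card + n)) ∧
      n * I.card ≤ 2 * ((A' ×ˢ I).filter fun q =>
        ((p q.2).eval q.1, (p q.2).eval (π q.1)) ∈ Q).card := by
  obtain ⟨A', hA'A, hcard, π, hπ, hoverlap⟩ := exists_partner hbad
  set m := T.card
  set E := d * (D + 2)
  -- The gaps add up to at most `E * m * I.card`, so at most a quarter of `n * I.card` exceed `L`.
  set L := 4 * (E * m) / n
  have hL : L * n ≤ 4 * (E * m) := Nat.div_mul_le_self _ _
  have hL' : 4 * (E * m) ≤ (L + 1) * n := (Nat.lt_mul_of_div_lt (Nat.lt_succ_self L) hn).le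
  refine ⟨A', hA'A, π, fun a ha => ⟨(hπ a ha).1, (hπ a ha).2.2⟩, closePairs T L, ?_, ?_⟩
  · calc n * (closePairs T L).card ≤ n * (m * (2 * L + 1)) :=
          Nat.mul_le_mul_left _ (card_closePairs_le T L)
      _ = m * (2 * (L * n) + n) := by ring
      _ ≤ m * (2 * (4 * (E * m)) + n) := by gcongr
      _ ≤ (8 * E + 1) * (m * (m + n)) := by nlinarith [Nat.zero_le (E * m * n), Nat.zero_le (m * m)]
  set close : Finset (ℝ × ι) := (A' ×ˢ I).filter fun q =>
    ((p q.2).eval q.1, (p q.2).eval (π q.1)) ∈ closePairs T L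
  set far : Finset (ℝ × ι) := (A' ×ˢ I).filter fun q =>
    ¬((p q.2).eval q.1, (p q.2).eval (π q.1)) ∈ closePairs T L
  have hfar_gap : far.card * (L + 1) ≤ I.card * (m * E) :=
    card_filter_notMem_closePairs_mul_le (fun a ha => (hπ a ha).2.1.le) hoverlap hp
      fun a ha i hi => ⟨hT a (hA'A ha) i hi, hT _ (hπ a ha).1 i hi⟩
  have hfar : 4 * far.card ≤ n * I.card := by
    refine Nat.le_of_mul_le_mul_right (c := L + 1) ?_ (Nat.succ_pos L)
    nlinarith
  have hsplit : close.card + far.card = A'.card * I.card := by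
    rw [Finset.card_filter_add_card_filter_not, Finset.card_product]
  have hA' : 3 * n * I.card ≤ 4 * A'.card * I.card := Nat.mul_le_mul_right _ (by lia)
  lia

theorem cube_le_sq_of_cube_le {C n m : ℕ} (h : n ^ 3 ≤ C * (m * (m + n))) :
    n ^ 3 ≤ (2 * C * m) ^ 2 := by
  rcases le_total n m with hnm | hmn
  · calc n ^ 3 ≤ C * (m * (m + m)) := h.trans (by gcongr)
      _ = 2 * C * m ^ 2 := by ring
      _ ≤ (2 * C) ^ 2 * m ^ 2 := Nat.mul_le_mul_right _ (Nat.le_self_pow two_ne_zero _)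
      _ = (2 * C * m) ^ 2 := by ring
  rcases n.eq_zero_or_pos with rfl | hn
  · simp
  have hsq : n ^ 2 ≤ 2 * C * m := by
    refine le_of_mul_le_mul_left ?_ hn
    calc n * n ^ 2 = n ^ 3 := by ring
      _ ≤ C * (m * (n + n)) := h.trans (by gcongr)
      _ = n * (2 * C * m) := by ring
  calc n ^ 3 ≤ n ^ 4 := Nat.pow_le_pow_right hn (by norm_num)
    _ = (n ^ 2) ^ 2 := by ring
    _ ≤ (2 * C * m) ^ 2 := Nat.pow_le_pow_left hsq 2

theorem exists_const_of_cube_le (C n₀ : ℕ) : ∃ c : ℝ, 0 < c ∧ ∀ n m : ℕ, (0 < n → 0 < m) →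
    (n₀ ≤ n → n ^ 3 ≤ C * (m * (m + n))) → c * (n : ℝ) ^ ((3 : ℝ) / 2) ≤ m := by
  set E := 2 * C + n₀ ^ 3 + 1
  have hE₀ : (0 : ℝ) < E := by positivity
  refine ⟨(E : ℝ)⁻¹, inv_pos.2 hE₀, fun n m hnm h => ?_⟩
  have hcube : n ^ 3 ≤ (E * m) ^ 2 := by
    rcases n.eq_zero_or_pos with rfl | hn
    · simp
    rcases le_or_gt n₀ n with hn₀ | hn₀
    · exact (cube_le_sq_of_cube_le (h hn₀)).trans (by gcongr; lia)
    · calc n ^ 3 ≤ n₀ ^ 3 := by gcongr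
        _ ≤ E := by lia
        _ ≤ E * m := Nat.le_mul_of_pos_right _ (hnm hn)
        _ ≤ (E * m) ^ 2 := Nat.le_self_pow two_ne_zero _
  rw [inv_mul_le_iff₀ hE₀, ← sq_le_sq₀ (by positivity) (by positivity), ← Real.rpow_natCast,
    ← Real.rpow_mul n.cast_nonneg, show (3 : ℝ) / 2 * (2 : ℕ) = (3 : ℕ) by norm_num,
    Real.rpow_natCast]
  exact_mod_cast hcube

end Proximity

/-! ### Algebraic relations of bounded degree -/

section Elimination

variable {K σ τ : Type*} [Field K]

theorem totalDegree_aeval_le {F : σ → MvPolynomial τ K} {d : ℕ} (hF : ∀ i, (F i).totalDegree ≤ d)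
    (P : MvPolynomial σ K) : (aeval F P).totalDegree ≤ P.totalDegree * d := by
  rw [aeval_def, eval₂_eq]
  refine totalDegree_finsetSum_le fun m hm => (totalDegree_mul _ _).trans ?_
  rw [algebraMap_eq, totalDegree_C, zero_add]
  calc (∏ i ∈ m.support, F i ^ m i).totalDegree ≤ ∑ i ∈ m.support, (F i ^ m i).totalDegree :=
        totalDegree_finsetProd _ _
    _ ≤ ∑ i ∈ m.support, m i * d :=
        Finset.sum_le_sum fun i _ => (totalDegree_pow _ _).trans (Nat.mul_le_mul_left _ (hF i))
    _ = (∑ i ∈ m.support, m i) * d := (Finset.sum_mul _ _ _).symm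
    _ ≤ P.totalDegree * d := Nat.mul_le_mul_right _ (le_totalDegree hm)

theorem totalDegree_le_of_mem_restrictDegree [Fintype σ] {P : MvPolynomial σ K} {m : ℕ}
    (hP : P ∈ restrictDegree σ K m) : P.totalDegree ≤ Fintype.card σ * m :=
  Finset.sup_le fun s hs => by
    rw [Finsupp.sum_fintype _ _ fun _ => rfl]
    exact Finset.sum_le_card_nsmul _ _ _ fun i _ => (mem_restrictDegree _ _ _).1 hP s hs i

theorem finrank_restrictDegree [Fintype σ] (m : ℕ) :
    Module.finrank K (restrictDegree σ K m) = (m + 1) ^ Fintype.card σ := by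
  have e : {s : σ →₀ ℕ // ∀ i, s i ≤ m} ≃ (σ → {k // k ≤ m}) :=
    (Finsupp.equivFunOnFinite.subtypeEquiv fun _ => Iff.rfl).trans
      (Equiv.subtypePiEquivPi (p := fun _ k => k ≤ m))
  calc Module.finrank K (restrictDegree σ K m) = Nat.card {s : σ →₀ ℕ // ∀ i, s i ≤ m} :=
        Module.finrank_eq_nat_card_basis (basisRestrictSupport K _)
    _ = Nat.card (σ → {k // k ≤ m}) := Nat.card_congr e
    _ = (m + 1) ^ Fintype.card σ := by
      rw [Nat.card_fun, Nat.subtype_card (Finset.Iic m) (by simp), Nat.card_Iic,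
        Nat.card_eq_fintype_card]

theorem exists_annihilator [Fintype σ] [Fintype τ] (h : Fintype.card τ < Fintype.card σ) (d : ℕ) :
    ∃ D : ℕ, ∀ F : σ → MvPolynomial τ K, (∀ i, (F i).totalDegree ≤ d) →
      ∃ P : MvPolynomial σ K, P ≠ 0 ∧ P.totalDegree ≤ D ∧ aeval F P = 0 := by
  set s := Fintype.card σ
  set t := Fintype.card τ
  set N := (s * d + 1) ^ t
  refine ⟨s * N, fun F hF => ?_⟩
  have hmaps : ∀ P ∈ restrictDegree σ K N, aeval F P ∈ restrictDegree τ K (s * N * d) :=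
    fun P hP => restrictTotalDegree_le_restrictDegree _ _ _ <| (mem_restrictTotalDegree _ _ _).2 <|
      (totalDegree_aeval_le hF P).trans <|
        Nat.mul_le_mul_right _ (totalDegree_le_of_mem_restrictDegree hP)
  have hdim : Module.finrank K (restrictDegree τ K (s * N * d)) <
      Module.finrank K (restrictDegree σ K N) := by
    rw [finrank_restrictDegree, finrank_restrictDegree]
    calc (s * N * d + 1) ^ t ≤ ((s * d + 1) * (N + 1)) ^ t :=
          Nat.pow_le_pow_left (by nlinarith) t
      _ = N * (N + 1) ^ t := Nat.mul_pow _ _ _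
      _ < (N + 1) * (N + 1) ^ t := Nat.mul_lt_mul_of_pos_right N.lt_succ_self (by positivity)
      _ = (N + 1) ^ (t + 1) := (pow_succ' _ _).symm
      _ ≤ (N + 1) ^ s := Nat.pow_le_pow_right N.succ_pos h
  obtain ⟨P, hP, hP₀⟩ := (Submodule.ne_bot_iff _).1 <| LinearMap.ker_ne_bot_of_finrank_lt
    (f := (aeval F).toLinearMap.restrict hmaps) hdim
  exact ⟨P, fun h => hP₀ (Subtype.ext h), totalDegree_le_of_mem_restrictDegree P.2,
    congrArg Subtype.val (LinearMap.mem_ker.1 hP)⟩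

/-- The univariate polynomial `P(·, θ)` in the distinguished variable `none`. -/
def specialize (θ : σ → K) (P : MvPolynomial (Option σ) K) : K[X] :=
  (optionEquivLeft K σ P).map (eval θ)

theorem eval_specialize (θ : σ → K) (P : MvPolynomial (Option σ) K) (t : K) :
    (specialize θ P).eval t = eval (fun o => o.elim t θ) P :=
  (optionEquivLeft_elim_eval K σ θ t P).symm

theorem natDegree_specialize_le (θ : σ → K) (P : MvPolynomial (Option σ) K) :
    (specialize θ P).natDegree ≤ P.totalDegree :=
  Polynomial.natDegree_map_le.trans
    ((natDegree_optionEquivLeft K P).trans_le (degreeOf_le_totalDegree P none))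

theorem exists_elimination (K : Type*) [Field K] (σ : Type*) [Finite σ] (d : ℕ) :
    ∃ D : ℕ, ∀ F : σ → MvPolynomial σ K, (∀ i, (F i).totalDegree ≤ d) →
      AlgebraicIndependent K F → ∀ G : MvPolynomial σ K, G.totalDegree ≤ d →
      ∃ (P : MvPolynomial (Option σ) K) (w : MvPolynomial σ K), P.totalDegree ≤ D ∧ w ≠ 0 ∧
        w.totalDegree ≤ D ∧
        (∀ v, (specialize (fun i => eval v (F i)) P).eval (eval v G) = 0) ∧
        ∀ v, eval v w ≠ 0 → specialize (fun i => eval v (F i)) P ≠ 0 := by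
  have := Fintype.ofFinite σ
  obtain ⟨D, hD⟩ := exists_annihilator (K := K) (σ := Option σ) (τ := σ) (by simp) d
  refine ⟨D + D * d, fun F hF hind G hG => ?_⟩
  obtain ⟨P, hP₀, hPdeg, hP⟩ := hD (fun o => o.elim G F) fun o => by cases o <;> simp [hG, hF]
  set R := optionEquivLeft K σ P
  have hR : R ≠ 0 := by simpa [R] using hP₀
  refine ⟨P, aeval F R.leadingCoeff, by lia, fun h => ?_, ?_, fun v => ?_, fun v hv hspec => hv ?_⟩
  · exact hR (Polynomial.leadingCoeff_eq_zero.1 (algebraicIndependent_iff.1 hind _ h))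
  · exact ((totalDegree_aeval_le hF _).trans (Nat.mul_le_mul_right _
      ((totalDegree_coeff_optionEquivLeft_le _ _ _ _).trans hPdeg))).trans (Nat.le_add_left _ _)
  · rw [eval_specialize, ← map_zero (eval v), ← hP, eval_aeval]
    congr 2
    funext o
    cases o <;> rfl
  · rw [eval_aeval, ← Polynomial.coeff_natDegree, ← Polynomial.coeff_map]
    exact (congrArg (fun q => Polynomial.coeff q R.natDegree) hspec).trans (Polynomial.coeff_zero _)

end Elimination

section JacobianCriterion

variable {K σ τ : Type*} [Field K] [CharZero K] [Fintype σ]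

theorem exists_jacobian_relation {F : σ → MvPolynomial τ K} (hF : ¬AlgebraicIndependent K F) :
    ∃ p : σ → MvPolynomial τ K, p ≠ 0 ∧ ∀ j, ∑ i, p i * pderiv j (F i) = 0 := by
  rw [algebraicIndependent_iff] at hF
  push Not at hF
  -- Differentiate a relation of minimal degree: its partial derivatives cannot all be relations.
  obtain ⟨Q, ⟨hQ, hQ₀⟩, hmin⟩ := exists_minimalFor_of_wellFoundedLT
    (fun Q : MvPolynomial σ K => aeval F Q = 0 ∧ Q ≠ 0) totalDegree hF
  refine ⟨fun i => aeval F (pderiv i Q), fun hp => ?_, fun j => ?_⟩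
  · have hpderiv : ∀ i, pderiv i Q = 0 := fun i => by
      by_contra hne
      exact (totalDegree_pderiv_lt hne).not_ge
        (hmin ⟨congrFun hp i, hne⟩ (totalDegree_pderiv_lt hne).le)
    rw [eq_C_of_pderiv_eq_zero hpderiv, aeval_C, algebraMap_eq, C_eq_zero] at hQ
    exact hQ₀ (by rw [eq_C_of_pderiv_eq_zero hpderiv, hQ, C_0])
  · rw [← derivation_aeval, hQ, map_zero]

theorem algebraicIndependent_of_eval_det_ne_zero [dec : DecidableEq σ]
    {F : σ → MvPolynomial σ K} {v : σ → K}
    (h : (Matrix.of fun i j => eval v (pderiv j (F i))).det ≠ 0) : AlgebraicIndependent K F := by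
  by_contra hF
  obtain ⟨p, hp, hrel⟩ := exists_jacobian_relation hF
  refine hp (Matrix.eq_zero_of_vecMul_eq_zero (M := Matrix.of fun i j => pderiv j (F i))
    (fun hdet => h ?_) (funext hrel))
  rw [← map_zero (eval v), ← hdet, RingHom.map_det]
  rfl

end JacobianCriterion

section Fibers

theorem exists_card_fiber_le (K : Type*) [Field K] (σ : Type*) [Finite σ] (d : ℕ) :
    ∃ D : ℕ, ∀ F : σ → MvPolynomial σ K, (∀ i, (F i).totalDegree ≤ d) →
      AlgebraicIndependent K F → ∃ w : MvPolynomial σ K, w ≠ 0 ∧ w.totalDegree ≤ D ∧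
        ∀ (θ : σ → K) (S : Finset (σ → K)), (∀ v ∈ S, eval v w ≠ 0 ∧ ∀ i, eval v (F i) = θ i) →
          S.card ≤ D := by
  have := Fintype.ofFinite σ
  obtain ⟨D, hD⟩ := exists_elimination K σ (d + 1)
  refine ⟨Fintype.card σ * D + D ^ Fintype.card σ, fun F hF hind => ?_⟩
  choose P w hP hw hwdeg hroot hspec using fun i =>
    hD F (fun j => (hF j).trans d.le_succ) hind (X i) (by simp)
  refine ⟨∏ i, w i, Finset.prod_ne_zero_iff.2 fun i _ => hw i, ?_, fun θ S hS => ?_⟩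
  · exact ((totalDegree_finsetProd _ _).trans
      (Finset.sum_le_card_nsmul _ _ _ fun i _ => hwdeg i)).trans (Nat.le_add_right _ _)
  have hsub : S ⊆ Fintype.piFinset fun i => (specialize θ (P i)).roots.toFinset := fun v hv => by
    obtain ⟨hvw, hvθ⟩ := hS v hv
    rw [map_prod, Finset.prod_ne_zero_iff] at hvw
    rw [← funext hvθ]
    refine Fintype.mem_piFinset.2 fun i => Multiset.mem_toFinset.2 <|
      (Polynomial.mem_roots (hspec i v (hvw i (Finset.mem_univ i)))).2 ?_
    simpa using hroot i v
  calc S.card ≤ ∏ i, (specialize θ (P i)).roots.toFinset.card :=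
        (Finset.card_le_card hsub).trans_eq (Fintype.card_piFinset _)
    _ ≤ ∏ _i : σ, D := Finset.prod_le_prod' fun i _ => (Multiset.toFinset_card_le _).trans <|
        (Polynomial.card_roots' _).trans <| (natDegree_specialize_le _ _).trans (hP i)
    _ = D ^ Fintype.card σ := by simp
    _ ≤ _ := Nat.le_add_left _ _

end Fibers

/-! ### Zeros on coordinate lines -/

section Zeros

variable {K σ : Type*} [Field K] {w : MvPolynomial σ K} {D : ℕ}

theorem eval_eq_zero_of_totalDegree_lt_card {v : σ → K} {i : σ} {S : Finset K}
    (hS : w.totalDegree < S.card) (h : ∀ t ∈ S, eval (Function.update v i t) w = 0) :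
    eval v w = 0 := by
  rw [← eval_slice_self v i, Polynomial.eq_zero_of_natDegree_lt_card_of_eval_eq_zero' _ S
    (fun t ht => (eval_slice v i w t).trans (h t ht)) ((natDegree_slice_le v i w).trans_lt hS),
    Polynomial.eval_zero]

theorem card_filter_eval_update_eq_zero_le (hw : w.totalDegree ≤ D) {v : σ → K}
    (hv : eval v w ≠ 0) (i : σ) (S : Finset K) :
    (S.filter fun t => eval (Function.update v i t) w = 0).card ≤ D := by
  by_contra! h
  exact hv (eval_eq_zero_of_totalDegree_lt_card (hw.trans_lt h) fun t ht =>
    (Finset.mem_filter.1 ht).2)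

theorem card_filter_eval_update_update_eq_zero_le (hw : w.totalDegree ≤ D) {v : σ → K}
    (hv : eval v w ≠ 0) (i j : σ) (B C : Finset K) :
    ((B ×ˢ C).filter fun q =>
      eval (Function.update (Function.update v i q.1) j q.2) w = 0).card ≤
        D * (B.card + C.card) := by
  set Z := B.filter fun b => eval (Function.update v i b) w = 0
  have hcover : ((B ×ˢ C).filter fun q =>
      eval (Function.update (Function.update v i q.1) j q.2) w = 0) ⊆
        Z ×ˢ C ∪ (B \ Z).biUnion fun b => (C.filter fun c =>
          eval (Function.update (Function.update v i b) j c) w = 0).image (Prod.mk b) := by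
    rintro ⟨b, c⟩ hbc
    simp only [Finset.mem_filter, Finset.mem_product, Finset.mem_union, Finset.mem_biUnion,
      Finset.mem_sdiff, Finset.mem_image] at hbc ⊢
    exact (em (b ∈ Z)).imp (fun hb => ⟨hb, hbc.1.2⟩)
      fun hb => ⟨b, ⟨hbc.1.1, hb⟩, c, ⟨hbc.1.2, hbc.2⟩, rfl⟩
  refine (Finset.card_le_card hcover).trans ((Finset.card_union_le _ _).trans ?_)
  rw [Finset.card_product, mul_add, add_comm, mul_comm D B.card]
  refine Nat.add_le_add ?_
    (Nat.mul_le_mul_right _ (card_filter_eval_update_eq_zero_le hw hv i B))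
  refine (Finset.card_biUnion_le_card_mul _ _ D fun b hb => Finset.card_image_le.trans ?_).trans
    (Nat.mul_le_mul_right _ (Finset.card_le_card Finset.sdiff_subset))
  rw [Finset.mem_sdiff] at hb
  exact card_filter_eval_update_eq_zero_le hw
    (fun h => hb.2 (Finset.mem_filter.2 ⟨hb.1, h⟩)) j C

end Zeros

theorem exists_nondegenerate_close_partners {σ ι : Type*} {w : MvPolynomial σ ℝ} {D : ℕ}
    (hw : w.totalDegree ≤ D) {O : σ → ℝ} (hO : eval O w ≠ 0) (i j : σ) {A : Finset ℝ}
    (hA : 8 * D + 4 ≤ A.card) {T : Finset ℝ} {I : Finset ι} {p : ι → ℝ[X]} {d : ℕ}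
    (hp : ∀ k ∈ I, (p k).natDegree ≤ d) (hT : ∀ a ∈ A, ∀ k ∈ I, (p k).eval a ∈ T) :
    ∃ A' ⊆ A, ∃ π : ℝ → ℝ,
      (∀ a ∈ A', π a ∈ A ∧ eval (Function.update (Function.update O i a) j (π a)) w ≠ 0) ∧
      ∃ Q : Finset (ℝ × ℝ),
        A.card * Q.card ≤ (8 * (d * (D + 2)) + 1) * (T.card * (T.card + A.card)) ∧
        A.card * I.card ≤ 2 * ((A' ×ˢ I).filter fun q =>
          ((p q.2).eval q.1, (p q.2).eval (π q.1)) ∈ Q).card := by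
  set A₀ := A.filter fun a => ¬eval (Function.update O i a) w = 0
  have hA₀ : A.card ≤ A₀.card + D := by
    rw [← Finset.card_filter_add_card_filter_not (s := A) fun a =>
      eval (Function.update O i a) w = 0, add_comm]
    exact Nat.add_le_add_left (card_filter_eval_update_eq_zero_le hw hO i A) _
  obtain ⟨A', hA', π, hπ, Q, hQ⟩ := exists_close_partners (A := A₀) (n := A.card)
    (bad := fun a => A.filter fun b =>
      eval (Function.update (Function.update O i a) j b) w = 0)
    (fun a ha => card_filter_eval_update_eq_zero_le hw (Finset.mem_filter.1 ha).2 j A)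
    (by lia) (by lia) hp (fun a ha => hT a (Finset.mem_filter.1 ha).1)
  refine ⟨A', hA'.trans (Finset.filter_subset _ _), π, fun a ha => ?_, Q, hQ⟩
  have hπA := (Finset.mem_filter.1 (hπ a ha).1).1
  exact ⟨hπA, fun h => (hπ a ha).2 (Finset.mem_filter.2 ⟨hπA, h⟩)⟩

/-! ### Expansion -/

section Expands

variable {σ τ : Type*} [Fintype σ] [Fintype τ] {f : MvPolynomial σ ℝ} {A : σ → Finset ℝ}

/-- The set of values taken by a polynomial on a finite grid. -/
def valueSet (f : MvPolynomial σ ℝ) (A : σ → Finset ℝ) : Finset ℝ :=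
  (Fintype.piFinset A).image fun v => eval v f

/-- `f` takes at least `c * n ^ (3 / 2)` values on every grid with `n` points in each direction. -/
def Expands (c : ℝ) (f : MvPolynomial σ ℝ) : Prop :=
  ∀ (A : σ → Finset ℝ) (n : ℕ), (∀ i, (A i).card = n) →
    c * (n : ℝ) ^ ((3 : ℝ) / 2) ≤ (valueSet f A).card

theorem eval_mem_valueSet {v : σ → ℝ} (hv : ∀ i, v i ∈ A i) : eval v f ∈ valueSet f A :=
  Finset.mem_image_of_mem _ (Fintype.mem_piFinset.2 hv)

theorem Expands.mono {c c' : ℝ} (hf : Expands c f) (h : c' ≤ c) : Expands c' f := fun A n hA =>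
  (mul_le_mul_of_nonneg_right h (by positivity)).trans (hf A n hA)

theorem valueSet_rename_of_injective {e : σ → τ} (he : Function.Injective e) (A : τ → Finset ℝ)
    (hA : ∀ j, (A j).Nonempty) : valueSet (rename e f) A = valueSet f (A ∘ e) := by
  ext t
  simp only [valueSet, Finset.mem_image, Fintype.mem_piFinset, eval_rename, Function.comp_apply]
  constructor
  · rintro ⟨v, hv, rfl⟩
    exact ⟨v ∘ e, fun i => hv (e i), rfl⟩
  · rintro ⟨v, hv, rfl⟩
    choose s hs using hA
    refine ⟨Function.extend e v s, fun j => ?_, by rw [Function.extend_comp he]⟩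
    by_cases hj : ∃ i, e i = j
    · obtain ⟨i, rfl⟩ := hj
      rw [he.extend_apply]
      exact hv i
    · rw [Function.extend_apply' _ _ _ hj]
      exact hs j

theorem Expands.rename {c : ℝ} (hf : Expands c f) {e : σ → τ} (he : Function.Injective e) :
    Expands c (rename e f) := fun A n hA => by
  rcases n.eq_zero_or_pos with rfl | hn
  · simp
  rw [valueSet_rename_of_injective he A fun j => Finset.card_pos.1 ((hA j).symm ▸ hn)]
  exact hf _ n fun i => hA (e i)

theorem exists_expands_of_cube_le (σ : Type*) [Fintype σ] (C n₀ : ℕ) :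
    ∃ c : ℝ, 0 < c ∧ ∀ f : MvPolynomial σ ℝ,
      (∀ (A : σ → Finset ℝ) (n : ℕ), (∀ i, (A i).card = n) → n₀ ≤ n →
        n ^ 3 ≤ C * ((valueSet f A).card * ((valueSet f A).card + n))) → Expands c f := by
  obtain ⟨c, hc, hcn⟩ := exists_const_of_cube_le C n₀
  refine ⟨c, hc, fun f hf A n hA => hcn n _ (fun hn => ?_) (hf A n hA)⟩
  exact Finset.card_pos.2 <| Finset.Nonempty.image (Fintype.piFinset_nonempty.2 fun i =>
    Finset.card_pos.1 ((hA i).symm ▸ hn)) _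

end Expands

/-! ### Expansion in three variables -/

section ThreeVariables

variable {f : MvPolynomial (Fin 3) ℝ} {d D : ℕ}

/-- The map `(x, u, y, z) ↦ (x, u, f(x, y, z), f(u, y, z))`. -/
def doubleFirst (f : MvPolynomial (Fin 3) ℝ) : Fin 4 → MvPolynomial (Fin 4) ℝ :=
  ![X 0, X 1, rename ![0, 2, 3] f, rename ![1, 2, 3] f]

theorem comp_triple {ι α : Type*} (v : ι → α) (i j k : ι) : v ∘ ![i, j, k] = ![v i, v j, v k] := by
  funext l
  fin_cases l <;> rfl

theorem eval_doubleFirst (f : MvPolynomial (Fin 3) ℝ) (x u y z : ℝ) (i : Fin 4) :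
    eval ![x, u, y, z] (doubleFirst f i) =
      ![x, u, eval ![x, y, z] f, eval ![u, y, z] f] i := by
  fin_cases i <;> simp [doubleFirst, eval_rename, comp_triple]

theorem totalDegree_doubleFirst_le (hf : f.totalDegree ≤ d) (i : Fin 4) :
    (doubleFirst f i).totalDegree ≤ d + 1 := by
  have h : ∀ e : Fin 3 → Fin 4, (rename e f).totalDegree ≤ d + 1 := fun e =>
    ((totalDegree_rename_le e f).trans hf).trans d.le_succ
  fin_cases i <;> simp [doubleFirst, h]

theorem algebraicIndependent_doubleFirst {x u y z : ℝ}
    (h : eval ![x, y, z] (pderiv 1 f) * eval ![u, y, z] (pderiv 2 f) ≠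
      eval ![u, y, z] (pderiv 1 f) * eval ![x, y, z] (pderiv 2 f)) :
    AlgebraicIndependent ℝ (doubleFirst f) := by
  refine algebraicIndependent_of_eval_det_ne_zero
    (dec := instDecidableEqFin 4) (v := ![x, u, y, z]) ?_
  let p : ℝ → Fin 3 → ℝ := fun t i => eval ![t, y, z] (pderiv i f)
  have hjac : (Matrix.of fun i j => eval ![x, u, y, z] (pderiv j (doubleFirst f i))) =
      !![1, 0, 0, 0;
         0, 1, 0, 0;
         p x 0, 0, p x 1, p x 2;
         0, p u 0, p u 1, p u 2] := by
    ext i j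
    fin_cases i <;> fin_cases j <;>
      simp [p, doubleFirst, eval_pderiv_rename, Fin.sum_univ_three, comp_triple]
  rw [hjac]
  rw [ne_eq, ← sub_eq_zero] at h
  convert h using 2
  simp [p, Matrix.det_succ_row_zero, Fin.sum_univ_succ]
  ring

theorem update_update_zero_one [dec : DecidableEq (Fin 4)] (v : Fin 4 → ℝ)
    (x u : ℝ) :
    Function.update (Function.update v 0 x) 1 u = ![x, u, v 2, v 3] := by
  obtain rfl : dec = instDecidableEqFin 4 := Subsingleton.elim _ _
  funext i
  fin_cases i <;> rfl

theorem update_update_two_three [dec : DecidableEq (Fin 4)] (x u y z b c : ℝ) :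
    Function.update (Function.update ![x, u, y, z] 2 b) 3 c = ![x, u, b, c] := by
  obtain rfl : dec = instDecidableEqFin 4 := Subsingleton.elim _ _
  funext i
  fin_cases i <;> rfl

theorem card_common_values_le {w : MvPolynomial (Fin 4) ℝ} (hw : w.totalDegree ≤ D)
    (hfiber : ∀ (θ : Fin 4 → ℝ) (S : Finset (Fin 4 → ℝ)),
      (∀ v ∈ S, eval v w ≠ 0 ∧ ∀ i, eval v (doubleFirst f i) = θ i) → S.card ≤ D)
    {x u y z : ℝ} (hO : eval ![x, u, y, z] w ≠ 0) (B C : Finset ℝ) (Q : Finset (ℝ × ℝ)) :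
    ((B ×ˢ C).filter fun q => (eval ![x, q.1, q.2] f, eval ![u, q.1, q.2] f) ∈ Q).card ≤
      D * (B.card + C.card) + D * Q.card := by
  set Z := (B ×ˢ C).filter fun q => eval ![x, u, q.1, q.2] w = 0
  set G := (B ×ˢ C).filter fun q => eval ![x, u, q.1, q.2] w ≠ 0 ∧
    (eval ![x, q.1, q.2] f, eval ![u, q.1, q.2] f) ∈ Q
  have hZ : Z.card ≤ D * (B.card + C.card) := by
    simpa only [update_update_two_three] using
      card_filter_eval_update_update_eq_zero_le hw hO 2 3 B C
  have hG : G.card ≤ D * Q.card := by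
    refine Finset.card_le_mul_card_image_of_maps_to
      (f := fun q => (eval ![x, q.1, q.2] f, eval ![u, q.1, q.2] f))
      (fun q hq => (Finset.mem_filter.1 hq).2.2) D fun t _ => ?_
    rw [← Finset.card_image_of_injective (f := fun q : ℝ × ℝ => ![x, u, q.1, q.2]) _
      fun q q' h => Prod.ext (congrFun h 2) (congrFun h 3)]
    refine hfiber ![x, u, t.1, t.2] _ fun v hv => ?_
    obtain ⟨q, hq, rfl⟩ := Finset.mem_image.1 hv
    obtain ⟨hqG, rfl⟩ := Finset.mem_filter.1 hq
    exact ⟨(Finset.mem_filter.1 hqG).2.1, eval_doubleFirst f x u q.1 q.2⟩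
  refine (Finset.card_le_card fun q hq => ?_).trans
    ((Finset.card_union_le Z G).trans (Nat.add_le_add hZ hG))
  obtain ⟨hqBC, hqQ⟩ := Finset.mem_filter.1 hq
  rw [Finset.mem_union, Finset.mem_filter, Finset.mem_filter]
  exact (em _).imp (⟨hqBC, ·⟩) (⟨hqBC, ·, hqQ⟩)

theorem eval_slice_first (f : MvPolynomial (Fin 3) ℝ) (y z t : ℝ) :
    (slice ![0, y, z] 0 f).eval t = eval ![t, y, z] f := by
  rw [eval_slice]
  congr 2
  funext i
  fin_cases i <;> simp

theorem exists_expands_of_pderiv_one_two_ratio_ne (d : ℕ) : ∃ c : ℝ, 0 < c ∧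
    ∀ f : MvPolynomial (Fin 3) ℝ, f.totalDegree ≤ d → ∀ x u y z : ℝ,
      eval ![x, y, z] (pderiv 1 f) * eval ![u, y, z] (pderiv 2 f) ≠
        eval ![u, y, z] (pderiv 1 f) * eval ![x, y, z] (pderiv 2 f) → Expands c f := by
  obtain ⟨D, hD⟩ := exists_card_fiber_le ℝ (Fin 4) (d + 1)
  set E := 8 * (d * (D + 2)) + 1
  obtain ⟨c, hc, hexp⟩ := exists_expands_of_cube_le (Fin 3) (4 * D * E) (8 * D + 4)
  refine ⟨c, hc, fun f hf x u y z hne => hexp f fun A n hA hn => ?_⟩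
  obtain ⟨w, hw₀, hw, hfiber⟩ := hD _ (totalDegree_doubleFirst_le hf)
    (algebraicIndependent_doubleFirst hne)
  obtain ⟨O, hO⟩ := exists_eval_ne_zero hw₀
  set T := valueSet f A
  obtain ⟨A', hA'A, π, hπ, Q, hQ, hclose⟩ := exists_nondegenerate_close_partners hw hO 0 1
    (A := A 0) (I := A 1 ×ˢ A 2) (T := T) (p := fun q => slice ![0, q.1, q.2] 0 f)
    ((hA 0).symm ▸ hn) (fun q _ => (natDegree_slice_le _ _ _).trans hf) fun a ha q hq => by
      rw [eval_slice_first]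
      have := Finset.mem_product.1 hq
      exact eval_mem_valueSet fun i => by fin_cases i <;> simp [ha, this]
  simp only [eval_slice_first, update_update_zero_one] at hπ hclose
  set close := (A' ×ˢ (A 1 ×ˢ A 2)).filter fun q =>
    (eval ![q.1, q.2.1, q.2.2] f, eval ![π q.1, q.2.1, q.2.2] f) ∈ Q
  have hcount : close.card ≤ n * (D * (n + n) + D * Q.card) := by
    rw [Finset.card_filter, Finset.sum_product]
    refine (Finset.sum_le_card_nsmul _ _ _ fun a ha => ?_).trans
      (Nat.mul_le_mul_right _ ((Finset.card_le_card hA'A).trans_eq (hA 0)))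
    rw [← Finset.card_filter]
    simpa only [hA] using card_common_values_le hw hfiber (hπ a ha).2 (A 1) (A 2) Q
  rw [hA] at hQ
  rw [Finset.card_product, hA, hA, hA] at hclose
  have hlarge : 8 * D * n ^ 2 ≤ n * n ^ 2 := Nat.mul_le_mul_right _ (by lia)
  calc n ^ 3 ≤ 4 * D * (n * Q.card) := by nlinarith
    _ ≤ 4 * D * (E * (T.card * (T.card + n))) := Nat.mul_le_mul_left _ hQ
    _ = 4 * D * E * (T.card * (T.card + n)) := (mul_assoc _ _ _).symm

end ThreeVariables

/-! ### Expansion in two variables -/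

section Energy

variable {α β γ : Type*} [DecidableEq γ]

theorem card_sq_le_card_mul_sum_card_fiber {G : Finset α} {Q : Finset γ} {φ : α → γ}
    (hφ : ∀ p ∈ G, φ p ∈ Q) :
    G.card ^ 2 ≤ Q.card * ∑ p ∈ G, (G.filter fun p' => φ p' = φ p).card := by
  have hsum : ∑ p ∈ G, (G.filter fun p' => φ p' = φ p).card =
      ∑ t ∈ Q, (G.filter fun p => φ p = t).card ^ 2 := by
    rw [← Finset.sum_fiberwise_of_maps_to hφ]
    refine Finset.sum_congr rfl fun t _ => ?_
    rw [Finset.sum_congr rfl fun p hp => by rw [(Finset.mem_filter.1 hp).2], Finset.sum_const,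
      smul_eq_mul, sq]
  rw [hsum, Finset.card_eq_sum_card_fiberwise hφ]
  exact sq_sum_le_card_mul_sum_sq

variable {A : Finset α} {B : Finset β} {φ : α → β → γ} {d D M n : ℕ}

theorem sum_le_mul_of_card_filter_lt_le {f : α → ℕ} (hA : A.card ≤ n) (hf : ∀ a ∈ A, f a ≤ n)
    (hD : (A.filter fun a => M < f a).card ≤ D) : ∑ a ∈ A, f a ≤ n * (M + D) := by
  calc ∑ a ∈ A, f a ≤ ∑ a ∈ A, (M + if M < f a then n else 0) := by
        refine Finset.sum_le_sum fun a ha => ?_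
        have := hf a ha
        split_ifs <;> lia
    _ = A.card * M + (A.filter fun a => M < f a).card * n := by
        rw [Finset.sum_add_distrib, Finset.sum_const, ← Finset.sum_filter, Finset.sum_const,
          smul_eq_mul, smul_eq_mul]
    _ ≤ n * M + D * n := by gcongr
    _ = n * (M + D) := by ring

theorem sum_card_fiber_le (hA : A.card ≤ n) (hB : B.card ≤ n)
    (hfiber : ∀ a ∈ A, ∀ t, (B.filter fun b => φ a b = t).card ≤ d)
    (hshared : ∀ a ∈ A,
      (A.filter fun a' => M < (B.filter fun b => ∃ b' ∈ B, φ a' b' = φ a b).card).card ≤ D) :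
    ∑ q ∈ A ×ˢ B, ((A ×ˢ B).filter fun q' => φ q'.1 q'.2 = φ q.1 q.2).card ≤
      n * (n * (d * (M + D))) := by
  let shared : α → α → Finset β := fun a a' => B.filter fun b => ∃ b' ∈ B, φ a' b' = φ a b
  calc ∑ q ∈ A ×ˢ B, ((A ×ˢ B).filter fun q' => φ q'.1 q'.2 = φ q.1 q.2).card
      = ∑ a ∈ A, ∑ b ∈ B, ∑ a' ∈ A, (B.filter fun b' => φ a' b' = φ a b).card := by
        simp only [Finset.card_filter, Finset.sum_product]
    _ = ∑ a ∈ A, ∑ a' ∈ A, ∑ b ∈ B, (B.filter fun b' => φ a' b' = φ a b).card :=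
        Finset.sum_congr rfl fun a _ => Finset.sum_comm
    _ ≤ ∑ a ∈ A, ∑ a' ∈ A, (shared a a').card * d := by
        refine Finset.sum_le_sum fun a _ => Finset.sum_le_sum fun a' ha' => ?_
        rw [← smul_eq_mul, ← Finset.sum_const, Finset.sum_filter]
        refine Finset.sum_le_sum fun b _ => ?_
        split_ifs with h
        · exact hfiber a' ha' _
        · rw [Finset.filter_eq_empty_iff.2 fun b' hb' heq => h ⟨b', hb', heq⟩, Finset.card_empty]
    _ ≤ ∑ _a ∈ A, n * (M + D) * d := Finset.sum_le_sum fun a ha => by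
        rw [← Finset.sum_mul]
        exact Nat.mul_le_mul_right d (sum_le_mul_of_card_filter_lt_le hA
          (fun a' _ => (Finset.card_filter_le _ _).trans hB) (hshared a ha))
    _ ≤ n * (n * (d * (M + D))) := by
        rw [Finset.sum_const, smul_eq_mul, mul_assoc, mul_comm d]
        exact Nat.mul_le_mul_right _ hA

theorem sq_card_filter_mem_le (hA : A.card ≤ n) (hB : B.card ≤ n)
    (hfiber : ∀ a ∈ A, ∀ t, (B.filter fun b => φ a b = t).card ≤ d)
    (hshared : ∀ a ∈ A,
      (A.filter fun a' => M < (B.filter fun b => ∃ b' ∈ B, φ a' b' = φ a b).card).card ≤ D)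
    (Q : Finset γ) :
    ((A ×ˢ B).filter fun q => φ q.1 q.2 ∈ Q).card ^ 2 ≤ Q.card * (n * (n * (d * (M + D)))) := by
  refine (card_sq_le_card_mul_sum_card_fiber fun q hq => (Finset.mem_filter.1 hq).2).trans
    (Nat.mul_le_mul_left _ (le_trans ?_ (sum_card_fiber_le hA hB hfiber hshared)))
  exact (Finset.sum_le_sum fun q _ => Finset.card_le_card
    (Finset.filter_subset_filter _ (Finset.filter_subset _ _))).trans
    (Finset.sum_le_sum_of_subset (Finset.filter_subset _ _))

end Energy

theorem eval_specialize_eq_zero_of_lt_card {K σ : Type*} [Field K] {F : σ → MvPolynomial σ K}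
    {d : ℕ} (hF : ∀ k, (F k).totalDegree ≤ d) {P : MvPolynomial (Option σ) K} {v : σ → K}
    {i j : σ} {t : K} {S : Finset K} (hS : P.totalDegree * d < S.card)
    (h : ∀ b ∈ S, ∀ c ∈ S, (specialize (fun k =>
      eval (Function.update (Function.update v i b) j c) (F k)) P).eval t = 0) :
    (specialize (fun k => eval v (F k)) P).eval t = 0 := by
  set R := aeval (fun o : Option σ => o.elim (C t) F) P
  have hR : ∀ u, (specialize (fun k => eval u (F k)) P).eval t = eval u R := fun u => by
    rw [eval_specialize, eval_aeval]
    congr 2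
    funext o
    cases o <;> simp
  have hRdeg : R.totalDegree < S.card :=
    (totalDegree_aeval_le (fun o => by cases o <;> simp [hF]) P).trans_lt hS
  simp only [hR] at h ⊢
  exact eval_eq_zero_of_totalDegree_lt_card hRdeg fun b hb =>
    eval_eq_zero_of_totalDegree_lt_card hRdeg fun c hc => h b hb c hc

section TwoVariables

variable {g : MvPolynomial (Fin 2) ℝ} {d D : ℕ}

/-- The map `(x, u, y, z) ↦ (g(x, y), g(u, y), g(x, z), g(u, z))`. -/
def rectangle (g : MvPolynomial (Fin 2) ℝ) : Fin 4 → MvPolynomial (Fin 4) ℝ :=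
  ![rename ![0, 2] g, rename ![1, 2] g, rename ![0, 3] g, rename ![1, 3] g]

theorem comp_pair {ι α : Type*} (v : ι → α) (i j : ι) : v ∘ ![i, j] = ![v i, v j] := by
  funext k
  fin_cases k <;> rfl

theorem eval_rectangle (g : MvPolynomial (Fin 2) ℝ) (x u y z : ℝ) (i : Fin 4) :
    eval ![x, u, y, z] (rectangle g i) =
      ![eval ![x, y] g, eval ![u, y] g, eval ![x, z] g, eval ![u, z] g] i := by
  fin_cases i <;> simp [rectangle, eval_rename, comp_pair]

theorem totalDegree_rectangle_le (hg : g.totalDegree ≤ d) (i : Fin 4) :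
    (rectangle g i).totalDegree ≤ d := by
  have h : ∀ e : Fin 2 → Fin 4, (rename e g).totalDegree ≤ d := fun e =>
    (totalDegree_rename_le e g).trans hg
  fin_cases i <;> simp [rectangle, h]

theorem algebraicIndependent_rectangle {x u y z : ℝ}
    (h : eval ![x, y] (pderiv 0 g) * eval ![u, z] (pderiv 0 g) *
        (eval ![x, z] (pderiv 1 g) * eval ![u, y] (pderiv 1 g)) ≠
      eval ![x, z] (pderiv 0 g) * eval ![u, y] (pderiv 0 g) *
        (eval ![x, y] (pderiv 1 g) * eval ![u, z] (pderiv 1 g))) :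
    AlgebraicIndependent ℝ (rectangle g) := by
  refine algebraicIndependent_of_eval_det_ne_zero
    (dec := instDecidableEqFin 4) (v := ![x, u, y, z]) ?_
  let p : ℝ → ℝ → ℝ := fun s t => eval ![s, t] (pderiv 0 g)
  let q : ℝ → ℝ → ℝ := fun s t => eval ![s, t] (pderiv 1 g)
  have hjac : (Matrix.of fun i j => eval ![x, u, y, z] (pderiv j (rectangle g i))) =
      !![p x y, 0, q x y, 0;
         0, p u y, q u y, 0;
         p x z, 0, 0, q x z;
         0, p u z, 0, q u z] := by
    ext i j
    fin_cases i <;> fin_cases j <;>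
      simp [p, q, rectangle, eval_pderiv_rename, comp_pair]
  rw [hjac]
  rw [ne_eq, ← sub_eq_zero] at h
  convert h using 2
  simp [p, q, Matrix.det_succ_row_zero, Fin.sum_univ_succ, Fin.succAbove]
  ring

theorem eval_slice_pair (g : MvPolynomial (Fin 2) ℝ) (y t : ℝ) :
    (slice ![0, y] 0 g).eval t = eval ![t, y] g := by
  rw [eval_slice]
  congr 2
  funext i
  fin_cases i <;> simp

theorem update_pair_one [dec : DecidableEq (Fin 2)] (x y z : ℝ) :
    Function.update ![x, y] 1 z = ![x, z] := by
  obtain rfl : dec = instDecidableEqFin 2 := Subsingleton.elim _ _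
  funext i
  fin_cases i <;> rfl

theorem card_filter_eval_eq_le (hg : g.totalDegree ≤ d) {x y z : ℝ}
    (hne : eval ![x, y] g ≠ eval ![x, z] g) (B : Finset ℝ) (t : ℝ) :
    (B.filter fun b => eval ![x, b] g = t).card ≤ d := by
  obtain ⟨s, hs⟩ : ∃ s, eval ![x, s] g ≠ t := by
    by_contra! h
    exact hne ((h y).trans (h z).symm)
  simpa [update_pair_one, sub_eq_zero] using card_filter_eval_update_eq_zero_le (w := g - C t)
    ((totalDegree_sub_C_le _ _).trans hg) (v := ![x, s]) (by simpa [sub_eq_zero] using hs) 1 B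

theorem card_filter_lt_card_shared_le (hg : g.totalDegree ≤ d)
    {P : MvPolynomial (Option (Fin 4)) ℝ} (hP : P.totalDegree ≤ D)
    (hrel : ∀ v, (specialize (fun i => eval v (rectangle g i)) P).eval (v 0) = 0)
    {x y z : ℝ} {π : ℝ → ℝ}
    (hne : specialize (fun i => eval ![x, π x, y, z] (rectangle g i)) P ≠ 0) (A B : Finset ℝ) :
    (A.filter fun x' => D * d < (B.filter fun b => ∃ b' ∈ B,
      (eval ![x', b'] g, eval ![π x', b'] g) = (eval ![x, b] g, eval ![π x, b] g)).card).card ≤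
        D := by
  refine (Finset.card_le_card (t := (specialize (fun i =>
    eval ![x, π x, y, z] (rectangle g i)) P).roots.toFinset) fun x' hx' => ?_).trans <|
      (Multiset.toFinset_card_le _).trans <| (Polynomial.card_roots' _).trans <|
        (natDegree_specialize_le _ _).trans hP
  refine Multiset.mem_toFinset.2 <| (Polynomial.mem_roots hne).2 <|
    eval_specialize_eq_zero_of_lt_card (totalDegree_rectangle_le hg) (i := 2) (j := 3)
      ((Nat.mul_le_mul_right d hP).trans_lt (Finset.mem_filter.1 hx').2) fun b hb c hc => ?_
  obtain ⟨-, b', -, hb'⟩ := Finset.mem_filter.1 hb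
  obtain ⟨-, c', -, hc'⟩ := Finset.mem_filter.1 hc
  rw [Prod.mk.injEq] at hb' hc'
  have h := hrel ![x', π x', b', c']
  simp only [eval_rectangle, update_update_two_three, hb', hc'] at h ⊢
  exact h

theorem exists_sq_card_close_le (d : ℕ) : ∃ D : ℕ, ∀ g : MvPolynomial (Fin 2) ℝ,
    g.totalDegree ≤ d → AlgebraicIndependent ℝ (rectangle g) →
    ∃ w : MvPolynomial (Fin 4) ℝ, w ≠ 0 ∧ w.totalDegree ≤ D ∧
      ∀ (A B : Finset ℝ) (n : ℕ) (y z : ℝ) (π : ℝ → ℝ), A.card ≤ n → B.card ≤ n →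
        (∀ a ∈ A, eval ![a, π a, y, z] w ≠ 0) → ∀ Q : Finset (ℝ × ℝ),
        ((A ×ˢ B).filter fun q => (eval ![q.1, q.2] g, eval ![π q.1, q.2] g) ∈ Q).card ^ 2 ≤
          Q.card * (n * (n * D)) := by
  obtain ⟨D, hD⟩ := exists_elimination ℝ (Fin 4) (d + 1)
  refine ⟨D + d + d * (D * d + D), fun g hg hind => ?_⟩
  obtain ⟨P, w, hP, hw₀, hw, hrel, hne⟩ := hD _
    (fun i => (totalDegree_rectangle_le hg i).trans d.le_succ) hind (X 0) (by simp)
  simp only [eval_X] at hrel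
  refine ⟨w * (rectangle g 0 - rectangle g 2),
    mul_ne_zero hw₀ (sub_ne_zero.2 (hind.injective.ne (by simp))), ?_,
    fun A B n y z π hA hB hπ Q => ?_⟩
  · have hdeg : (rectangle g 0 - rectangle g 2).totalDegree ≤ d := (totalDegree_sub _ _).trans
      (max_le (totalDegree_rectangle_le hg 0) (totalDegree_rectangle_le hg 2))
    exact ((totalDegree_mul _ _).trans (Nat.add_le_add hw hdeg)).trans (Nat.le_add_right _ _)
  simp only [map_mul, map_sub, eval_rectangle, Matrix.cons_val, mul_ne_zero_iff,
    sub_ne_zero] at hπ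
  have hfiber : ∀ a ∈ A, ∀ t,
      (B.filter fun b => (eval ![a, b] g, eval ![π a, b] g) = t).card ≤ d := fun a ha t =>
    (Finset.card_le_card (Finset.monotone_filter_right B fun b _ hb => congrArg Prod.fst hb)).trans
      (card_filter_eval_eq_le hg (hπ a ha).2 B t.1)
  refine (sq_card_filter_mem_le (φ := fun a b => (eval ![a, b] g, eval ![π a, b] g)) hA hB hfiber
    (fun a ha => card_filter_lt_card_shared_le hg hP hrel (hne _ (hπ a ha).1) A B) Q).trans ?_
  gcongr
  exact Nat.le_add_left _ _

theorem exists_expands_of_pderiv_cross_ratio_ne (d : ℕ) : ∃ c : ℝ, 0 < c ∧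
    ∀ g : MvPolynomial (Fin 2) ℝ, g.totalDegree ≤ d → ∀ x u y z : ℝ,
      eval ![x, y] (pderiv 0 g) * eval ![u, z] (pderiv 0 g) *
          (eval ![x, z] (pderiv 1 g) * eval ![u, y] (pderiv 1 g)) ≠
        eval ![x, z] (pderiv 0 g) * eval ![u, y] (pderiv 0 g) *
          (eval ![x, y] (pderiv 1 g) * eval ![u, z] (pderiv 1 g)) → Expands c g := by
  obtain ⟨D, hD⟩ := exists_sq_card_close_le d
  set E := 8 * (d * (D + 2)) + 1
  obtain ⟨c, hc, hexp⟩ := exists_expands_of_cube_le (Fin 2) (4 * D * E) (8 * D + 4)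
  refine ⟨c, hc, fun g hg x u y z hne => hexp g fun A n hA hn => ?_⟩
  obtain ⟨w, hw₀, hw, hsq⟩ := hD g hg (algebraicIndependent_rectangle hne)
  obtain ⟨O, hO⟩ := exists_eval_ne_zero hw₀
  set T := valueSet g A
  obtain ⟨A', hA'A, π, hπ, Q, hQ, hclose⟩ := exists_nondegenerate_close_partners hw hO 0 1
    (A := A 0) (I := A 1) (T := T) (p := fun b => slice ![0, b] 0 g)
    ((hA 0).symm ▸ hn) (fun b _ => (natDegree_slice_le _ _ _).trans hg) fun a ha b hb => by
      rw [eval_slice_pair]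
      exact eval_mem_valueSet fun i => by fin_cases i <;> simp [ha, hb]
  simp only [eval_slice_pair, update_update_zero_one] at hπ hclose
  have hn₀ : 0 < n := by lia
  have hsqQ := hsq A' (A 1) n _ _ π ((Finset.card_le_card hA'A).trans_eq (hA 0)) (hA 1).le
    (fun a ha => (hπ a ha).2) Q
  set close := (A' ×ˢ A 1).filter fun q => (eval ![q.1, q.2] g, eval ![π q.1, q.2] g) ∈ Q
  rw [hA] at hQ
  rw [hA, hA] at hclose
  have hnQ : n * n ≤ 4 * D * Q.card := by
    refine Nat.le_of_mul_le_mul_left ?_ (Nat.mul_pos hn₀ hn₀)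
    calc n * n * (n * n) ≤ (2 * close.card) * (2 * close.card) := Nat.mul_le_mul hclose hclose
      _ = 4 * close.card ^ 2 := by ring
      _ ≤ 4 * (Q.card * (n * (n * D))) := Nat.mul_le_mul_left _ hsqQ
      _ = n * n * (4 * D * Q.card) := by ring
  calc n ^ 3 = n * (n * n) := by ring
    _ ≤ n * (4 * D * Q.card) := Nat.mul_le_mul_left _ hnQ
    _ = 4 * D * (n * Q.card) := by ring
    _ ≤ 4 * D * (E * (T.card * (T.card + n))) := Nat.mul_le_mul_left _ hQ
    _ = 4 * D * E * (T.card * (T.card + n)) := (mul_assoc _ _ _).symm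

end TwoVariables

/-! ### The dichotomy -/

theorem expands_or_hasSpecialForm_of_pderiv_eq_zero {m d : ℕ} {c : ℝ}
    (hc : ∀ g : MvPolynomial (Fin m) ℝ, g.totalDegree ≤ d → Expands c g ∨ HasSpecialForm g)
    {f : MvPolynomial (Fin (m + 1)) ℝ} (hf : f.totalDegree ≤ d) {i : Fin (m + 1)}
    (hi : pderiv i f = 0) : Expands c f ∨ HasSpecialForm f := by
  have hinj := Fin.succAbove_right_injective (p := i)
  obtain ⟨g, rfl, hg⟩ := exists_rename_eq_of_pderiv_eq_zero hinj (f := f) fun j hj => by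
    rw [Fin.range_succAbove, Set.mem_compl_singleton_iff, not_not] at hj
    rwa [hj]
  exact (hc g (hg.trans hf)).imp (.rename · hinj) (.rename hinj)

theorem exists_expands_or_hasSpecialForm_two (d : ℕ) : ∃ c : ℝ, 0 < c ∧
    ∀ g : MvPolynomial (Fin 2) ℝ, g.totalDegree ≤ d → Expands c g ∨ HasSpecialForm g := by
  obtain ⟨c, hc, hexp⟩ := exists_expands_of_pderiv_cross_ratio_ne d
  refine ⟨c, hc, fun g hg => ?_⟩
  by_cases hpderiv : ∃ i, pderiv i g = 0
  · obtain ⟨i, hi⟩ := hpderiv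
    exact expands_or_hasSpecialForm_of_pderiv_eq_zero (fun p _ => .inr (.of_unique p)) hg hi
  push Not at hpderiv
  refine or_iff_not_imp_left.2 fun hg' =>
    hasSpecialForm_of_pderiv_cross_ratio (hpderiv 0) (hpderiv 1) fun v w => ?_
  have hpair : ∀ t : Fin 2 → ℝ, ![t 0, t 1] = t := fun t => by
    funext i
    fin_cases i <;> rfl
  by_contra hne
  exact hg' (hexp g hg (v 0) (w 0) (v 1) (w 1) (by simpa only [hpair] using hne))

theorem exists_expands_of_pderiv_ratio_ne (d : ℕ) : ∃ c : ℝ, 0 < c ∧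
    ∀ f : MvPolynomial (Fin 3) ℝ, f.totalDegree ≤ d →
      ∀ (i j : Fin 3) (v w : Fin 3 → ℝ), v i = w i → v j = w j →
        eval v (pderiv i f) * eval w (pderiv j f) ≠
          eval w (pderiv i f) * eval v (pderiv j f) → Expands c f := by
  obtain ⟨c, hc, hexp⟩ := exists_expands_of_pderiv_one_two_ratio_ne d
  refine ⟨c, hc, fun f hf i j v w hi hj hne => ?_⟩
  have hij : i ≠ j := by
    rintro rfl
    exact hne (mul_comm _ _)
  obtain ⟨k, hki, hkj⟩ := Fin.exists_ne_and_ne_of_two_lt i j (by lia)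
  have hinj : Function.Injective ![k, i, j] := by
    simp [Function.Injective, Fin.forall_fin_succ, hij, hki, hkj, hij.symm, hki.symm, hkj.symm]
  obtain ⟨g, rfl, hg⟩ := exists_rename_eq_of_pderiv_eq_zero hinj (f := f) fun l hl =>
    (hl (Finite.surjective_of_injective hinj l)).elim
  have heval : ∀ (u : Fin 3 → ℝ) (l : Fin 3),
      eval u (pderiv (![k, i, j] l) (rename ![k, i, j] g)) = eval ![u k, u i, u j] (pderiv l g) :=
    fun u l => by rw [pderiv_rename hinj, eval_rename, comp_triple]
  have heval₁ : ∀ u, eval u (pderiv i (rename ![k, i, j] g)) = _ := fun u => heval u 1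
  have heval₂ : ∀ u, eval u (pderiv j (rename ![k, i, j] g)) = _ := fun u => heval u 2
  refine (hexp g (hg.trans hf) (v k) (w k) (v i) (v j) ?_).rename hinj
  rwa [heval₁, heval₂, heval₁, heval₂, ← hi, ← hj] at hne

theorem exists_expands_or_hasSpecialForm_three (d : ℕ) : ∃ c : ℝ, 0 < c ∧
    ∀ f : MvPolynomial (Fin 3) ℝ, f.totalDegree ≤ d → Expands c f ∨ HasSpecialForm f := by
  obtain ⟨c, hc, htwo⟩ := exists_expands_or_hasSpecialForm_two d
  obtain ⟨c', hc', hexp⟩ := exists_expands_of_pderiv_ratio_ne d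
  refine ⟨min c c', lt_min hc hc', fun f hf => ?_⟩
  by_cases hpderiv : ∃ i, pderiv i f = 0
  · obtain ⟨i, hi⟩ := hpderiv
    exact (expands_or_hasSpecialForm_of_pderiv_eq_zero htwo hf hi).imp_left
      fun h => h.mono (min_le_left _ _)
  push Not at hpderiv
  refine or_iff_not_imp_left.2 fun hf' =>
    hasSpecialForm_of_pderiv_ratio (by simp) hpderiv fun i j v w hi hj => ?_
  by_contra hne
  exact hf' ((hexp f hf i j v w hi hj hne).mono (min_le_right _ _))

theorem image_eval_eq_valueSet (f : MvPolynomial (Fin 3) ℝ) (A B C : Finset ℝ) :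
    ((A ×ˢ B ×ˢ C).image fun p : ℝ × ℝ × ℝ => eval ![p.1, p.2.1, p.2.2] f) =
      valueSet f ![A, B, C] := by
  ext t
  simp [valueSet, Fintype.mem_piFinset, Fin.forall_fin_succ, Fin.exists_fin_succ_pi, and_assoc]

theorem eval_polynomial_aeval {σ R : Type*} [CommSemiring R] (v : σ → R)
    (p : MvPolynomial σ R) (g : R[X]) :
    eval v (Polynomial.aeval p g) = g.eval (eval v p) := by
  simpa [aeval_eq_eval] using (Polynomial.aeval_algHom_apply (aeval v) p g).symm

theorem HasSpecialForm.exists_eval_eq {f : MvPolynomial (Fin 3) ℝ} (hf : HasSpecialForm f) :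
    ∃ g h k l : ℝ[X],
      (∀ x y z, eval ![x, y, z] f = g.eval (h.eval x + k.eval y + l.eval z)) ∨
        ∀ x y z, eval ![x, y, z] f = g.eval (h.eval x * k.eval y * l.eval z) := by
  obtain ⟨g, h, hf⟩ := hf
  refine ⟨g, h 0, h 1, h 2, hf.imp ?_ ?_⟩ <;> rintro rfl x y z
  · simp [eval_polynomial_aeval, Fin.sum_univ_three]
  · simp [eval_polynomial_aeval, Fin.prod_univ_three]

end ExpandingPolynomial

/-- **Expansion bound for three-variable real polynomials** (Corollary 1.3).
For `f ∈ ℝ[x,y,z]` of degree `d`, either `|f(A×B×C)| ≥ c·n^{3/2}` for all finite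
`A,B,C ⊂ ℝ` of equal size `n`, with `c > 0` depending only on `d`, or
`f = g(h(x)+k(y)+l(z))` or `f = g(h(x)·k(y)·l(z))` for univariate `g,h,k,l`. -/
theorem expanding_polynomial_three_vars (d : ℕ) :
    ∃ c : ℝ, 0 < c ∧ ∀ f : MvPolynomial (Fin 3) ℝ, f.totalDegree = d →
      (∀ A B C : Finset ℝ, A.card = B.card → B.card = C.card →
          c * (A.card : ℝ) ^ ((3:ℝ)/2) ≤
            (((A ×ˢ B ×ˢ C).image fun p : ℝ × ℝ × ℝ => eval ![p.1, p.2.1, p.2.2] f).card : ℝ))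
      ∨ (∃ g h k l : Polynomial ℝ,
          (∀ x y z : ℝ, eval ![x, y, z] f =
            Polynomial.eval (Polynomial.eval x h + Polynomial.eval y k + Polynomial.eval z l) g) ∨
          (∀ x y z : ℝ, eval ![x, y, z] f =
            Polynomial.eval (Polynomial.eval x h * Polynomial.eval y k * Polynomial.eval z l) g)) := by
  obtain ⟨c, hc, h⟩ := ExpandingPolynomial.exists_expands_or_hasSpecialForm_three d
  refine ⟨c, hc, fun f hf => (h f hf.le).imp (fun hexp A B C hAB hBC => ?_) (·.exists_eval_eq)⟩
  rw [ExpandingPolynomial.image_eval_eq_valueSet]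
  exact hexp _ _ (by simp [Fin.forall_fin_succ, hAB, hBC])
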